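/- arXiv:1205.6770 — 3 statements merged into one kernel-verified Lean document; each statement's English description precedes it below -/
import Mathlib

section
/- Let (R,m) be a Noetherian local ring, M a finite R-module with dim M = d ≥ 1, and J an ideal generated by a system of parameters for M. Then e₁(J,M) ≤ 0. -/
open IsLocalRing Filter Function CategoryTheory

universe u

section Defs

variable (R : Type u) [CommRing R]

/-- The length of a module, as the Krull dimension of its lattice of submodules. -/
noncomputable def mlen (M : Type u) [AddCommGroup M] [Module R M] : WithBot ℕ∞ :=
  Order.krullDim (Submodule R M)

/-- The (Krull) dimension of a module. -/
noncomputable def mdim (M : Type u) [AddCommGroup M] [Module R M] : WithBot ℕ∞ :=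
  ringKrullDim (R ⧸ Module.annihilator R M)

/-- The depth of `M` with respect to an ideal `I`: the supremum of the lengths of
`M`-regular sequences consisting of elements of `I`. -/
noncomputable def idepth (I : Ideal R) (M : Type u) [AddCommGroup M] [Module R M] : ℕ∞ :=
  sSup {n : ℕ∞ | ∃ rs : List R, (rs.length : ℕ∞) = n ∧ (∀ r ∈ rs, r ∈ I) ∧
    RingTheory.Sequence.IsRegular M rs}

/-- The depth of a module over a local ring. -/
noncomputable def mdepth [IsLocalRing R] (M : Type u) [AddCommGroup M] [Module R M] : ℕ∞ :=
  idepth R (maximalIdeal R) M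

/-- A Cohen–Macaulay module over a local ring: depth = dimension. -/
def IsCMMod [IsLocalRing R] (M : Type u) [AddCommGroup M] [Module R M] : Prop :=
  (mdepth R M : WithBot ℕ∞) = mdim R M

/-- A Cohen–Macaulay local ring. -/
def IsCMRing [IsLocalRing R] : Prop := (mdepth R R : WithBot ℕ∞) = ringKrullDim R

/-- A maximal Cohen–Macaulay module: finite with depth = dim R. -/
def IsMCMMod [IsLocalRing R] (M : Type u) [AddCommGroup M] [Module R M] : Prop :=
  Module.Finite R M ∧ (mdepth R M : WithBot ℕ∞) = ringKrullDim R

/-- `H⁰_m(M)`: the submodule of elements killed by a power of the maximal ideal. -/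
def H0 [IsLocalRing R] (M : Type u) [AddCommGroup M] [Module R M] : Submodule R M :=
  ⨆ n : ℕ, Submodule.torsionBySet R M ((maximalIdeal R ^ n : Ideal R) : Set R)

/-- The `i`-th local cohomology of `M` with support in the maximal ideal. -/
noncomputable def lcoh [IsLocalRing R] (i : ℕ) (M : Type u) [AddCommGroup M] [Module R M] :
    ModuleCat.{u} R :=
  (localCohomology (maximalIdeal R) i).obj (ModuleCat.of R M)

/-- The value at `n` of the Hilbert–Samuel polynomial in dimension `d` with coefficients
`e 0, …, e d`:  `∑ (-1)^i eᵢ C(n+d-1-i, d-i)`. -/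
def hsPoly (d : ℕ) (e : ℕ → ℤ) (n : ℕ) : ℤ :=
  ∑ i ∈ Finset.range (d + 1), (-1 : ℤ) ^ i * e i * ((n + d - 1 - i).choose (d - i) : ℤ)

/-- `I` is a parameter ideal for `M` of dimension `d`: generated by `d` elements with
`M/IM` of finite length. -/
def IsParameterIdeal [IsLocalRing R] (I : Ideal R) (d : ℕ) (M : Type u) [AddCommGroup M]
    [Module R M] : Prop :=
  (∃ a : Fin d → R, I = Ideal.span (Set.range a)) ∧ mlen R (M ⧸ (I • (⊤ : Submodule R M))) < ⊤

/-- `ℓ` records the Hilbert–Samuel function of `I` on `M`:  `ℓ n = λ(M/IⁿM)`. -/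
def IsHilbSeq (I : Ideal R) (M : Type u) [AddCommGroup M] [Module R M] (ℓ : ℕ → ℕ) : Prop :=
  ∀ n : ℕ, mlen R (M ⧸ (I ^ n • (⊤ : Submodule R M))) = ((ℓ n : ℕ∞) : WithBot ℕ∞)

/-- `e 0, …, e d` are the Hilbert coefficients of `I` on `M`: the Hilbert–Samuel function
eventually agrees with the Hilbert–Samuel polynomial with these coefficients. -/
def HasHilbCoeffs (I : Ideal R) (M : Type u) [AddCommGroup M] [Module R M] (d : ℕ)
    (e : ℕ → ℤ) : Prop :=
  ∃ ℓ : ℕ → ℕ, IsHilbSeq R I M ℓ ∧ ∀ᶠ n in atTop, (ℓ n : ℤ) = hsPoly d e n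

/-- A local ring is unmixed if every associated prime of its completion has
dimension equal to `dim R`. -/
def Unmixed [IsLocalRing R] : Prop :=
  ∀ p ∈ associatedPrimes (AdicCompletion (maximalIdeal R) R)
      (AdicCompletion (maximalIdeal R) R),
    ringKrullDim ((AdicCompletion (maximalIdeal R) R) ⧸ p) = ringKrullDim R

/-- The height of an ideal: the infimum of the heights of the primes containing it. -/
noncomputable def idealHeight (I : Ideal R) : ℕ∞ :=
  ⨅ p ∈ {p : PrimeSpectrum R | I ≤ p.asIdeal}, Order.height p

/-- A regular local ring: the maximal ideal is generated by `dim R` elements. -/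
def IsRegularLocal [IsLocalRing R] : Prop :=
  ∃ s : Finset R, Ideal.span (s : Set R) = maximalIdeal R ∧
    ((s.card : ℕ∞) : WithBot ℕ∞) = ringKrullDim R

end Defs

/-!
Write `J = (a₀, …, aₜ)`. A composition series of `M / JM` induces a filtration of `JⁱM / Jⁱ⁺¹M`: a
simple step `N ⋖ N + Rx`, with `x` killed modulo `N` by the maximal ideal `I`, contributes
`Jⁱ(N + Rx) / JⁱN`, the degree `i` part of a cyclic graded module over `(R/I)[X₀, …, Xₜ]`. If this
module is free, its Hilbert function is `C(i + t, t)`; otherwise multiplication by a nonzero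
relation shows that its Hilbert function is `o(iᵗ)`. With `c` the number of free steps,
`λ(JⁱM / Jⁱ⁺¹M)` is at least `c * C(i + t, t)`, with equality to leading order. Hence `e₀ = c`, and
summing over `i < n` gives `λ(M / JⁿM) ≥ e₀ * C(n + t, t + 1)`. The next term of the
Hilbert–Samuel polynomial, `-e₁ * C(n + t - 1, t)`, therefore cannot have a negative coefficient.
-/

section HilbertLike

open Asymptotics Topology Nat

theorem tendsto_add_choose_div_pow (m k : ℕ) :
    Tendsto (fun n : ℕ ↦ ((n + m).choose k : ℝ) / (n : ℝ) ^ k) atTop (𝓝 (1 / k !)) := by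
  have hshift : (fun n : ℕ ↦ ((n + m : ℕ) : ℝ)) ~[atTop] fun n : ℕ ↦ (n : ℝ) := by
    simp only [Nat.cast_add]
    exact IsEquivalent.refl.add_isLittleO
      ((isLittleO_const_id_atTop (m : ℝ)).comp_tendsto tendsto_natCast_atTop_atTop)
  have hchoose : (fun n : ℕ ↦ ((n + m).choose k : ℝ)) ~[atTop] fun n : ℕ ↦ (n : ℝ) ^ k / k ! :=
    ((isEquivalent_choose k).comp_tendsto (tendsto_add_atTop_nat m)).trans
      ((hshift.pow k).div .refl)
  refine ((hchoose.div (.refl (u := fun n : ℕ ↦ (n : ℝ) ^ k))).congr_right ?_).tendsto_const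
  filter_upwards [eventually_ne_atTop 0] with n hn
  simp only [Pi.div_apply, const_apply]
  field_simp

/-- `h` satisfies `h i ≥ c * C(i + t, t)` for all `i`, with equality to leading order `iᵗ`. This is
how the Hilbert function of a graded module of rank `c` generated in degree `0` over a polynomial
ring in `t + 1` variables over a field behaves. -/
structure IsHilbertLike (t c : ℕ) (h : ℕ → ℕ) : Prop where
  le : ∀ i, c * (i + t).choose t ≤ h i
  tendsto : Tendsto (fun i : ℕ ↦ (h i : ℝ) / (i : ℝ) ^ t) atTop (𝓝 (c / t !))

namespace IsHilbertLike

variable {t c c' : ℕ} {h h' : ℕ → ℕ}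

theorem zero (t : ℕ) : IsHilbertLike t 0 0 := ⟨by simp, by simp⟩

theorem choose (t : ℕ) : IsHilbertLike t 1 fun i ↦ (i + t).choose t :=
  ⟨by simp, by simpa using tendsto_add_choose_div_pow t t⟩

theorem add (hh : IsHilbertLike t c h) (hh' : IsHilbertLike t c' h') :
    IsHilbertLike t (c + c') (h + h') where
  le i := by simpa [add_mul] using Nat.add_le_add (hh.le i) (hh'.le i)
  tendsto := by simpa [add_div] using hh.tendsto.add hh'.tendsto

theorem of_add_choose_le {s : ℕ}
    (hs : ∀ i, h (i + s) + (i + t).choose t ≤ (i + s + t).choose t) : IsHilbertLike t 0 h where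
  le := by simp
  tendsto := by
    have hdiff : Tendsto (fun i : ℕ ↦ ((i + (s + t)).choose t : ℝ) / (i : ℝ) ^ t -
        ((i + t).choose t : ℝ) / (i : ℝ) ^ t) atTop (𝓝 0) := by
      simpa using (tendsto_add_choose_div_pow (s + t) t).sub (tendsto_add_choose_div_pow t t)
    rw [Nat.cast_zero, zero_div, ← tendsto_add_atTop_iff_nat s]
    refine squeeze_zero' (.of_forall fun i ↦ by positivity) ?_ hdiff
    filter_upwards [eventually_gt_atTop 0] with i hi
    have hsi : (h (i + s) : ℝ) + (i + t).choose t ≤ (i + (s + t)).choose t :=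
      mod_cast add_assoc i s t ▸ hs i
    rw [← sub_div]
    calc (h (i + s) : ℝ) / ((i + s : ℕ) : ℝ) ^ t ≤ h (i + s) / (i : ℝ) ^ t := by
          gcongr
          exact le_self_add
      _ ≤ _ := by gcongr; linarith

theorem mul_choose_le_sum (hh : IsHilbertLike t c h) (n : ℕ) :
    c * (n + t).choose (t + 1) ≤ ∑ i ∈ Finset.range n, h i := by
  have hockeyStick : (n + t).choose (t + 1) = ∑ i ∈ Finset.range n, (i + t).choose t := by
    cases n with
    | zero => simp
    | succ n => rw [Nat.sum_range_add_choose, Nat.add_right_comm]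
  rw [hockeyStick, Finset.mul_sum]
  exact Finset.sum_le_sum fun i _ ↦ hh.le i

end IsHilbertLike

theorem hsPoly_succ (d : ℕ) (e : ℕ → ℤ) (n : ℕ) :
    hsPoly (d + 1) e n = e 0 * (n + d).choose (d + 1) - hsPoly d (fun i ↦ e (i + 1)) n := by
  have hindex (i : ℕ) : n + (d + 1) - 1 - (i + 1) = n + d - 1 - i := by omega
  simp only [hsPoly, Finset.sum_range_succ' _ (d + 1), hindex, Nat.add_sub_add_right]
  simp [pow_succ, sub_eq_neg_add]

theorem hsPoly_succ_add_one (d : ℕ) (e : ℕ → ℤ) (n : ℕ) :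
    hsPoly (d + 1) e (n + 1) = hsPoly (d + 1) e n + hsPoly d e (n + 1) := by
  have pascal (i : ℕ) (hi : i ∈ Finset.range (d + 1)) :
      (n + 1 + (d + 1) - 1 - i).choose (d + 1 - i) =
        (n + (d + 1) - 1 - i).choose (d + 1 - i) + (n + 1 + d - 1 - i).choose (d - i) := by
    obtain ⟨j, rfl⟩ := Nat.exists_eq_add_of_le (Finset.mem_range_succ_iff.1 hi)
    have hleft : i + j + 1 - i = j + 1 := by omega
    have htop : n + 1 + (i + j + 1) - 1 - i = n + j + 1 := by omega
    have hbot : n + (i + j + 1) - 1 - i = n + j := by omega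
    have hdown : n + 1 + (i + j) - 1 - i = n + j := by omega
    rw [hleft, htop, hbot, hdown, Nat.add_sub_cancel_left, Nat.choose_succ_succ', add_comm]
  simp only [hsPoly, Finset.sum_range_succ _ (d + 1)]
  rw [Finset.sum_congr rfl fun i hi ↦ by rw [pascal i hi]]
  simp only [Nat.cast_add, mul_add, Finset.sum_add_distrib, Nat.sub_self, Nat.choose_zero_right]
  ring

theorem tendsto_hsPoly_div_pow (d : ℕ) (e : ℕ → ℤ) (m : ℕ) :
    Tendsto (fun n : ℕ ↦ (hsPoly d e (n + m) : ℝ) / (n : ℝ) ^ d) atTop (𝓝 (e 0 / d !)) := by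
  induction d generalizing e with
  | zero => simp [hsPoly]
  | succ d ih =>
    have hlead := (tendsto_add_choose_div_pow (m + d) (d + 1)).const_mul (e 0 : ℝ)
    have hrest := (ih fun i ↦ e (i + 1)).mul tendsto_inv_atTop_nhds_zero_nat
    rw [mul_zero] at hrest
    convert hlead.sub hrest using 2 with n
    · rw [hsPoly_succ]
      push_cast
      rw [add_assoc]
      ring
    · ring

theorem IsHilbertLike.hsPoly_coeff_one_nonpos {t c : ℕ} {h : ℕ → ℕ} {e : ℕ → ℤ}
    (hh : IsHilbertLike t c h)
    (he : ∀ᶠ n in atTop, ((∑ i ∈ Finset.range n, h i : ℕ) : ℤ) = hsPoly (t + 1) e n) :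
    e 1 ≤ 0 := by
  have hdiff : ∀ᶠ n in atTop, (h n : ℤ) = hsPoly t e (n + 1) := by
    filter_upwards [he, (tendsto_add_atTop_nat 1).eventually he] with n hn hn'
    rw [hsPoly_succ_add_one, ← hn, Finset.sum_range_succ] at hn'
    push_cast at hn'
    linarith
  have hc : e 0 = c := by
    have hlim := tendsto_nhds_unique_of_eventuallyEq (tendsto_hsPoly_div_pow t e 1) hh.tendsto
      (hdiff.mono fun n hn ↦ by simp only [← hn, Int.cast_natCast])
    field_simp at hlim
    exact_mod_cast hlim
  have hshift : ∀ᶠ n in atTop, (hsPoly t (fun i ↦ e (i + 1)) n : ℝ) / (n : ℝ) ^ t ≤ 0 := by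
    filter_upwards [he] with n hn
    refine div_nonpos_of_nonpos_of_nonneg ?_ (by positivity)
    have hle : (c * (n + t).choose (t + 1) : ℤ) ≤ (∑ i ∈ Finset.range n, h i : ℕ) :=
      mod_cast hh.mul_choose_le_sum n
    rw [hn, hsPoly_succ, hc] at hle
    exact_mod_cast le_of_sub_nonneg (by linarith)
  have hlim := le_of_tendsto (tendsto_hsPoly_div_pow t (fun i ↦ e (i + 1)) 0) hshift
  rw [zero_add, div_le_iff₀ (by positivity), zero_mul] at hlim
  exact_mod_cast hlim

end HilbertLike

section Length

variable {R M P : Type*} [CommRing R] [AddCommGroup M] [Module R M] [AddCommGroup P] [Module R P]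

theorem length_quotient_eq_add (f : P →ₗ[R] M) (K : Submodule R M) :
    Module.length R (M ⧸ K) =
      Module.length R (P ⧸ K.comap f) + Module.length R (M ⧸ K ⊔ LinearMap.range f) := by
  refine Module.length_eq_add_of_exact ((K.comap f).mapQ K f le_rfl) (Submodule.factor le_sup_left)
    ?_ (Submodule.factor_surjective _) ?_
  · rw [← LinearMap.ker_eq_bot, Submodule.mapQ, Submodule.ker_liftQ, LinearMap.ker_comp,
      Submodule.ker_mkQ, Submodule.mkQ_map_self]
  · rw [LinearMap.exact_iff, Submodule.factor, Submodule.mapQ, Submodule.mapQ, Submodule.ker_liftQ,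
      Submodule.range_liftQ, LinearMap.range_comp]
    simp [Submodule.map_sup]

theorem exists_isMaximal_sup_span_of_covBy {N N' : Submodule R M} (hN : N ⋖ N') :
    ∃ (I : Ideal R) (x : M), I.IsMaximal ∧ N' = N ⊔ R ∙ x ∧ ∀ r ∈ I, r • x ∈ N := by
  obtain ⟨x, hxN', hxN⟩ := SetLike.exists_of_lt hN.lt
  have hsimple := (covBy_iff_quot_is_simple hN.le).1 hN
  let y : N' ⧸ N.comap N'.subtype := Submodule.Quotient.mk ⟨x, hxN'⟩
  have hy : y ≠ 0 := by simpa [y] using hxN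
  refine ⟨_, x, IsSimpleModule.ker_toSpanSingleton_isMaximal R hy, ?_, fun r hr ↦ ?_⟩
  · refine ((hN.eq_or_eq le_sup_left (sup_le hN.le ?_)).resolve_left fun h ↦ hxN ?_).symm
    · rwa [Submodule.span_singleton_le_iff_mem]
    · exact h ▸ Submodule.mem_sup_right (Submodule.mem_span_singleton_self x)
  · rw [LinearMap.mem_ker, LinearMap.toSpanSingleton_apply, ← Submodule.Quotient.mk_smul] at hr
    simpa using hr

end Length

section Forms

open MvPolynomial

variable {R M : Type*} [CommRing R] [AddCommGroup M] [Module R M] {σ : Type*}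

/-- The submodule of the module of forms of degree `i` consisting of those with coefficients
in `I`, encoded as the kernel of the reduction of coefficients modulo `I`. -/
noncomputable def formsWithCoeffsIn (σ : Type*) (I : Ideal R) (i : ℕ) :
    Submodule R (homogeneousSubmodule σ R i) :=
  (LinearMap.ker (mapAlgHom (Ideal.Quotient.mkₐ R I)).toLinearMap).submoduleOf _

theorem mem_formsWithCoeffsIn {I : Ideal R} {i : ℕ} {F : homogeneousSubmodule σ R i} :
    F ∈ formsWithCoeffsIn σ I i ↔ map (Ideal.Quotient.mk I) (F : MvPolynomial σ R) = 0 :=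
  Iff.rfl

theorem mem_formsWithCoeffsIn_iff_coeff {I : Ideal R} {i : ℕ} {F : homogeneousSubmodule σ R i} :
    F ∈ formsWithCoeffsIn σ I i ↔ ∀ m, coeff m (F : MvPolynomial σ R) ∈ I := by
  rw [mem_formsWithCoeffsIn, MvPolynomial.ext_iff]
  refine forall_congr' fun m ↦ ?_
  rw [coeff_map, coeff_zero, Ideal.Quotient.eq_zero_iff_mem]

/-- The coefficients of a form of degree `i`, indexed by the monomials of degree `i`. -/
noncomputable def formCoeffs (σ R : Type*) [CommRing R] (i : ℕ) :
    homogeneousSubmodule σ R i ≃ₗ[R] ({m : σ →₀ ℕ | m.degree = i} →₀ R) :=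
  (LinearEquiv.ofEq _ _ (homogeneousSubmodule_eq_finsupp_supported σ R i)).trans
    (AddMonoidAlgebra.supportedEquivFinsupp _)

theorem encard_degree_eq [Fintype σ] (i : ℕ) :
    {m : σ →₀ ℕ | m.degree = i}.encard = (Fintype.card σ).multichoose i := by
  classical
  have hdegree : {m : σ →₀ ℕ | m.degree = i} =
      ((Finset.univ : Finset σ).finsuppAntidiag i : Set (σ →₀ ℕ)) := by
    ext m
    simp [Finsupp.degree_eq_sum]
  rw [hdegree, Set.encard_coe_eq_coe_finsetCard, Finset.card_finsuppAntidiag_nat_eq_multichoose,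
    Finset.card_univ]

theorem length_quotient_formsWithCoeffsIn [Fintype σ] (I : Ideal R) (i : ℕ) :
    Module.length R (homogeneousSubmodule σ R i ⧸ formsWithCoeffsIn σ I i) =
      (Fintype.card σ).multichoose i * Module.length R (R ⧸ I) := by
  let reduce := Finsupp.mapRange.linearMap (α := {m : σ →₀ ℕ | m.degree = i}) I.mkQ ∘ₗ
    (formCoeffs σ R i).toLinearMap
  have hsurj : Function.Surjective reduce :=
    (Finsupp.mapRange_surjective _ (map_zero _) I.mkQ_surjective).comp (formCoeffs σ R i).surjective
  have hker : formsWithCoeffsIn σ I i = LinearMap.ker reduce := by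
    ext F
    rw [mem_formsWithCoeffsIn_iff_coeff]
    have hreduce (m : {m : σ →₀ ℕ | m.degree = i}) :
        reduce F m = 0 ↔ coeff m (F : MvPolynomial σ R) ∈ I :=
      Submodule.Quotient.mk_eq_zero I
    rw [LinearMap.mem_ker, Finsupp.ext_iff]
    refine ⟨fun hF m ↦ (hreduce m).2 (hF m), fun hF m ↦ ?_⟩
    by_cases hm : m.degree = i
    · exact (hreduce ⟨m, hm⟩).1 (hF ⟨m, hm⟩)
    · rw [F.2.coeff_eq_zero hm]
      exact I.zero_mem
  rw [hker, (reduce.quotKerEquivOfSurjective hsurj).length_eq, Module.length_finsupp,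
    ← encard_degree_eq]
  rfl

/-- Multiplication by a fixed form of degree `s`, as a map on forms of degree `i`. -/
noncomputable def mulForm {s : ℕ} (F : homogeneousSubmodule σ R s) (i : ℕ) :
    homogeneousSubmodule σ R i →ₗ[R] homogeneousSubmodule σ R (i + s) :=
  (LinearMap.mulRight R (F : MvPolynomial σ R)).restrict fun _ hG ↦ IsHomogeneous.mul hG F.2

theorem coe_mulForm {s i : ℕ} (F : homogeneousSubmodule σ R s) (G : homogeneousSubmodule σ R i) :
    (mulForm F i G : MvPolynomial σ R) = G * F :=
  rfl

theorem comap_mulForm_formsWithCoeffsIn {I : Ideal R} [I.IsPrime] {s : ℕ}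
    {F : homogeneousSubmodule σ R s} (hF : F ∉ formsWithCoeffsIn σ I s) (i : ℕ) :
    (formsWithCoeffsIn σ I (i + s)).comap (mulForm F i) = formsWithCoeffsIn σ I i := by
  ext G
  rw [mem_formsWithCoeffsIn] at hF
  rw [Submodule.mem_comap, mem_formsWithCoeffsIn, mem_formsWithCoeffsIn, coe_mulForm, map_mul,
    mul_eq_zero_iff_right hF]

/-- The map `F ↦ F(a) • x` on forms of degree `i`. -/
noncomputable def evalForm (a : σ → R) (x : M) (i : ℕ) : homogeneousSubmodule σ R i →ₗ[R] M :=
  LinearMap.toSpanSingleton R M x ∘ₗ (aeval a).toLinearMap ∘ₗ Submodule.subtype _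

theorem evalForm_apply (a : σ → R) (x : M) {i : ℕ} (F : homogeneousSubmodule σ R i) :
    evalForm a x i F = aeval a (F : MvPolynomial σ R) • x :=
  rfl

theorem range_evalForm (a : σ → R) (x : M) (i : ℕ) :
    LinearMap.range (evalForm a x i) = Ideal.span (Set.range a) ^ i • (R ∙ x) := by
  rw [Ideal.span_pow_eq_map_homogeneousSubmodule, evalForm, LinearMap.range_comp,
    LinearMap.range_comp, Submodule.range_subtype]
  ext y
  simp [Submodule.mem_smul_span_singleton]

/-- The forms `F` of degree `i` with `F(a) • x ∈ Jⁱ N`, where `J` is generated by `a`: the degree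
`i` part of the relations satisfied by the class of `x` in `⨁ Jⁱ(N + Rx) / JⁱN`. -/
noncomputable def relationForms (a : σ → R) (N : Submodule R M) (x : M) (i : ℕ) :
    Submodule R (homogeneousSubmodule σ R i) :=
  (Ideal.span (Set.range a) ^ i • N).comap (evalForm a x i)

variable {a : σ → R} {N : Submodule R M} {x : M} {I : Ideal R}

theorem aeval_mem_span_pow (a : σ → R) {i : ℕ} (F : homogeneousSubmodule σ R i) :
    aeval a (F : MvPolynomial σ R) ∈ Ideal.span (Set.range a) ^ i := by
  rw [Ideal.span_pow_eq_map_homogeneousSubmodule]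
  exact ⟨F, F.2, rfl⟩

theorem length_quotient_pow_smul_eq_add (a : σ → R) (N : Submodule R M) (x : M) (i : ℕ) :
    Module.length R (M ⧸ Ideal.span (Set.range a) ^ i • N) =
      Module.length R (homogeneousSubmodule σ R i ⧸ relationForms a N x i) +
        Module.length R (M ⧸ Ideal.span (Set.range a) ^ i • (N ⊔ R ∙ x)) := by
  rw [Submodule.smul_sup, ← range_evalForm]
  exact length_quotient_eq_add _ _

theorem formsWithCoeffsIn_le_relationForms (hx : ∀ r ∈ I, r • x ∈ N) (i : ℕ) :
    formsWithCoeffsIn σ I i ≤ relationForms a N x i := by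
  intro F hF
  rw [mem_formsWithCoeffsIn_iff_coeff] at hF
  rw [relationForms, Submodule.mem_comap, evalForm_apply, (F : MvPolynomial σ R).as_sum,
    map_sum, Finset.sum_smul]
  refine Submodule.sum_mem _ fun m hm ↦ ?_
  have hmonomial : (monomial m (1 : R)).IsHomogeneous i :=
    isHomogeneous_monomial 1 (F.2.degree_eq_sum_deg_support hm).symm
  have hterm : aeval a (monomial m (coeff m F.1)) • x =
      aeval a (monomial m (1 : R)) • coeff m F.1 • x := by
    rw [← mul_one (coeff m F.1), ← smul_eq_mul, ← smul_monomial, map_smul, smul_eq_mul, smul_eq_mul,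
      mul_one, mul_comm, mul_smul]
  rw [hterm]
  exact Submodule.smul_mem_smul (aeval_mem_span_pow a ⟨_, hmonomial⟩) (hx _ (hF m))

theorem mulForm_mem_relationForms {s i : ℕ} {F : homogeneousSubmodule σ R s}
    (hF : F ∈ relationForms a N x s) (G : homogeneousSubmodule σ R i) :
    mulForm F i G ∈ relationForms a N x (i + s) := by
  have heval : evalForm a x (i + s) (mulForm F i G) = aeval a G.1 • evalForm a x s F := by
    rw [evalForm_apply, evalForm_apply, coe_mulForm, map_mul, mul_smul]
  rw [relationForms, Submodule.mem_comap, heval, pow_add, Submodule.mul_smul]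
  exact Submodule.smul_mem_smul (aeval_mem_span_pow a G) hF

theorem length_quotient_relationForms_add_le [I.IsPrime] (hx : ∀ r ∈ I, r • x ∈ N) {s : ℕ}
    {F : homogeneousSubmodule σ R s} (hF : F ∈ relationForms a N x s)
    (hFI : F ∉ formsWithCoeffsIn σ I s) (i : ℕ) :
    Module.length R (homogeneousSubmodule σ R (i + s) ⧸ relationForms a N x (i + s)) +
        Module.length R (homogeneousSubmodule σ R i ⧸ formsWithCoeffsIn σ I i) ≤
      Module.length R (homogeneousSubmodule σ R (i + s) ⧸ formsWithCoeffsIn σ I (i + s)) := by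
  have hle : formsWithCoeffsIn σ I (i + s) ⊔ LinearMap.range (mulForm F i) ≤
      relationForms a N x (i + s) :=
    sup_le (formsWithCoeffsIn_le_relationForms hx _)
      (LinearMap.range_le_iff_comap.2 <| eq_top_iff.2 fun G _ ↦ mulForm_mem_relationForms hF G)
  rw [length_quotient_eq_add (mulForm F i) (formsWithCoeffsIn σ I (i + s)),
    comap_mulForm_formsWithCoeffsIn hFI, add_comm]
  gcongr
  exact Module.length_le_of_surjective _ (Submodule.factor_surjective hle)

end Forms

section Filtration

open MvPolynomial

variable {R M : Type*} [CommRing R] [AddCommGroup M] [Module R M] {t : ℕ}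

theorem length_quotient_formsWithCoeffsIn_of_isMaximal (t : ℕ) (I : Ideal R) [I.IsMaximal] (i : ℕ) :
    Module.length R (homogeneousSubmodule (Fin (t + 1)) R i ⧸ formsWithCoeffsIn (Fin (t + 1)) I i) =
      (i + t).choose t := by
  have : IsSimpleModule R (R ⧸ I) := isSimpleModule_iff_isCoatom.2 (Ideal.isMaximal_def.1 ‹_›)
  rw [length_quotient_formsWithCoeffsIn, Module.length_eq_one, mul_one, Fintype.card_fin,
    Nat.multichoose_eq, Nat.add_right_comm, Nat.add_sub_cancel, add_comm t, Nat.choose_symm_add]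

theorem exists_isHilbertLike_length_relationForms (a : Fin (t + 1) → R) {N : Submodule R M} {x : M}
    {I : Ideal R} [I.IsMaximal] (hx : ∀ r ∈ I, r • x ∈ N) :
    ∃ (c : ℕ) (h : ℕ → ℕ), IsHilbertLike t c h ∧ ∀ i,
      Module.length R (homogeneousSubmodule (Fin (t + 1)) R i ⧸ relationForms a N x i) = h i := by
  have hlen := length_quotient_formsWithCoeffsIn_of_isMaximal t I
  have hle := formsWithCoeffsIn_le_relationForms (a := a) hx
  by_cases hfree : ∀ i, relationForms a N x i ≤ formsWithCoeffsIn _ I i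
  · exact ⟨1, _, .choose t, fun i ↦ by rw [(hfree i).antisymm (hle i), hlen]⟩
  · push Not at hfree
    obtain ⟨s, hs⟩ := hfree
    obtain ⟨F, hF, hFI⟩ := SetLike.not_le_iff_exists.1 hs
    have hfin (i : ℕ) :
        Module.length R (homogeneousSubmodule (Fin (t + 1)) R i ⧸ relationForms a N x i) ≠ ⊤ :=
      ne_top_of_le_ne_top (hlen i ▸ ENat.natCast_ne_top _)
        (Module.length_le_of_surjective _ (Submodule.factor_surjective (hle i)))
    choose h hh using fun i ↦ ENat.ne_top_iff_exists.1 (hfin i)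
    refine ⟨0, h, .of_add_choose_le (s := s) fun i ↦ ?_, fun i ↦ (hh i).symm⟩
    have hadd := length_quotient_relationForms_add_le hx hF hFI i
    rw [← hh, hlen, hlen] at hadd
    exact_mod_cast hadd

theorem exists_isHilbertLike_length_of_covBy (a : Fin (t + 1) → R) {N N' : Submodule R M}
    (hN : N ⋖ N') :
    ∃ (c : ℕ) (h : ℕ → ℕ), IsHilbertLike t c h ∧ ∀ i,
      Module.length R (M ⧸ Ideal.span (Set.range a) ^ i • N) =
        h i + Module.length R (M ⧸ Ideal.span (Set.range a) ^ i • N') := by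
  obtain ⟨I, x, _, rfl, hx⟩ := exists_isMaximal_sup_span_of_covBy hN
  obtain ⟨c, h, hh, hlen⟩ := exists_isHilbertLike_length_relationForms a hx
  exact ⟨c, h, hh, fun i ↦ by rw [length_quotient_pow_smul_eq_add a N x, hlen]⟩

theorem exists_isHilbertLike_length_of_length_ne_top (a : Fin (t + 1) → R) {N : Submodule R M}
    (hN : Module.length R (M ⧸ N) ≠ ⊤) :
    ∃ (c : ℕ) (h : ℕ → ℕ), IsHilbertLike t c h ∧ ∀ i,
      Module.length R (M ⧸ Ideal.span (Set.range a) ^ i • N) =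
        h i + Module.length R (M ⧸ Ideal.span (Set.range a) ^ i • (⊤ : Submodule R M)) := by
  obtain ⟨_, _⟩ := isFiniteLength_iff_isNoetherian_isArtinian.1 (Module.length_ne_top_iff.1 hN)
  suffices ∀ A : Submodule R (M ⧸ N), ∃ (c : ℕ) (h : ℕ → ℕ), IsHilbertLike t c h ∧ ∀ i,
      Module.length R (M ⧸ Ideal.span (Set.range a) ^ i • A.comap N.mkQ) =
        h i + Module.length R (M ⧸ Ideal.span (Set.range a) ^ i • (⊤ : Submodule R M)) by
    have hbot := this ⊥
    rwa [Submodule.comap_bot, Submodule.ker_mkQ] at hbot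
  intro A
  induction A using WellFoundedGT.induction with
  | ind A ih =>
    by_cases hA : IsMax A
    · obtain rfl := isMax_iff_eq_top.1 hA
      exact ⟨0, 0, .zero t, fun i ↦ by
        rw [Submodule.comap_top, Pi.zero_apply, Nat.cast_zero, zero_add]⟩
    · obtain ⟨B, hAB⟩ := exists_covBy_of_wellFoundedLT hA
      obtain ⟨c, h, hh, hlen⟩ := exists_isHilbertLike_length_of_covBy a
        (Submodule.comap_covBy_of_surjective N.mkQ_surjective hAB)
      obtain ⟨c', h', hh', hlen'⟩ := ih B hAB.lt
      exact ⟨c + c', h + h', hh.add hh', fun i ↦ by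
        rw [hlen, hlen', Pi.add_apply, Nat.cast_add, add_assoc]⟩

end Filtration

theorem isHilbSeq_iff_length {R M : Type u} [CommRing R] [AddCommGroup M] [Module R M]
    {J : Ideal R} {ℓ : ℕ → ℕ} :
    IsHilbSeq R J M ℓ ↔ ∀ n, Module.length R (M ⧸ J ^ n • (⊤ : Submodule R M)) = ℓ n := by
  simp only [IsHilbSeq, mlen, ← Module.coe_length, WithBot.coe_inj]

theorem stmt_2_general {R M : Type u} [CommRing R] [AddCommGroup M] [Module R M] {d : ℕ}
    (hd : 1 ≤ d) (a : Fin d → R) {e : ℕ → ℤ}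
    (he : HasHilbCoeffs R (Ideal.span (Set.range a)) M d e) : e 1 ≤ 0 := by
  obtain ⟨t, rfl⟩ := Nat.exists_eq_add_of_le' hd
  obtain ⟨ℓ, hℓ, hpoly⟩ := he
  rw [isHilbSeq_iff_length] at hℓ
  obtain ⟨c, h, hh, hlen⟩ := exists_isHilbertLike_length_of_length_ne_top a
    (N := Ideal.span (Set.range a) ^ 1 • (⊤ : Submodule R M)) (by simp [hℓ])
  have hzero : ℓ 0 = 0 := by
    have hℓ₀ := hℓ 0
    rw [pow_zero, Submodule.one_smul, Module.length_eq_zero] at hℓ₀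
    exact_mod_cast hℓ₀.symm
  have hsucc (n : ℕ) : ℓ (n + 1) = ℓ n + h n := by
    have hlen' := hlen n
    rw [← Submodule.mul_smul, ← pow_add, hℓ, hℓ] at hlen'
    rw [add_comm (ℓ n)]
    exact_mod_cast hlen'
  have hsum (n : ℕ) : ∑ i ∈ Finset.range n, h i = ℓ n :=
    Finset.sum_range_induction h ℓ hzero n fun k _ ↦ hsucc k
  exact hh.hsPoly_coeff_one_nonpos (by simpa only [hsum] using hpoly)

/-- **Mandal–Singh–Verma.** For a `d`-dimensional finite module `M` over a Noetherian local
ring and an ideal `J` generated by a system of parameters for `M`, `e₁(J,M) ≤ 0`. -/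
theorem stmt_2 (R M : Type u) [CommRing R] [IsLocalRing R] [IsNoetherianRing R]
    [AddCommGroup M] [Module R M] [Module.Finite R M]
    (d : ℕ) (hd : 1 ≤ d) (hdim : mdim R M = (d : ℕ∞))
    (J : Ideal R) (hpar : IsParameterIdeal R J d M)
    (e : ℕ → ℤ) (he : HasHilbCoeffs R J M d e) :
    e 1 ≤ 0 := by
  obtain ⟨⟨a, rfl⟩, -⟩ := hpar
  exact stmt_2_general hd a he
end

section
/- Let S be a Noetherian local ring and J = (a₁,...,a_d) an ideal generated by a regular sequence. Then for every n ≥ 1, the i-th Betti number of S/Jⁿ over S equals C(n+d-1, d-i)·C(n+i-2, i-1) for 1 ≤ i ≤ d. -/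
open IsLocalRing Filter Function CategoryTheory

universe u

/-!
Let `K = I + (x)`, where `x` is a nonzerodivisor modulo every power of `I`, and let `N` be a module
killed by `K`. The sequence `0 → Iⁿ⁺¹ → Iⁿ⁺¹ × Kⁿ → Kⁿ⁺¹ → 0` with maps `u ↦ (-xu, u)` and
`(u, v) ↦ u + xv` is exact, and its first map vanishes on `Tor(-, N)`: the component `-x` does
because `x` kills `N`, and the inclusion `Iⁿ⁺¹ → Iⁿ` does because `Tor(Iⁿ⁺¹, N)` is generated by the
multiples `t · Tor(Iⁿ, N)` with `t ∈ I`. The latter property passes from `I` to `K` along the same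
long exact sequences. Adjoining the regular sequence one element at a time, the Betti numbers of the
powers therefore satisfy a Pascal-type recursion, solved by products of binomial coefficients.
-/

namespace EagonNorthcott

open MonoidalCategory

section PowerRegularity

variable {S : Type u} [CommRing S]

lemma sup_pow_succ (I X : Ideal S) (n : ℕ) :
    (I ⊔ X) ^ (n + 1) = I ^ (n + 1) ⊔ X * (I ⊔ X) ^ n := by
  induction n with
  | zero => simp
  | succ n ih =>
    have hle : X * I ^ (n + 1) ≤ X * (I ⊔ X) ^ (n + 1) :=
      Ideal.mul_mono_right (Ideal.pow_right_mono le_sup_left _)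
    calc (I ⊔ X) ^ (n + 1 + 1)
        = (I ⊔ X) * I ^ (n + 1) ⊔ X * (I ⊔ X) ^ (n + 1) := by
          rw [pow_succ', ih, Ideal.mul_sup, ← ih, mul_left_comm, ← pow_succ']
      _ = I ^ (n + 1 + 1) ⊔ X * (I ⊔ X) ^ (n + 1) := by
          rw [Ideal.sup_mul, ← pow_succ', sup_assoc, sup_eq_right.mpr hle]

lemma mem_sup_span_singleton_pow_succ {I : Ideal S} {x y : S} {n : ℕ} :
    y ∈ (I ⊔ Ideal.span {x}) ^ (n + 1) ↔
      ∃ u ∈ I ^ (n + 1), ∃ v ∈ (I ⊔ Ideal.span {x}) ^ n, u + x * v = y := by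
  simp only [sup_pow_succ, Submodule.mem_sup, Ideal.mem_span_singleton_mul,
    exists_exists_and_eq_and]

lemma mem_mul_sup_span_singleton_pow_succ {I L : Ideal S} {x y : S} {n : ℕ} :
    y ∈ L * (I ⊔ Ideal.span {x}) ^ (n + 1) ↔
      ∃ u ∈ L * I ^ (n + 1), ∃ v ∈ L * (I ⊔ Ideal.span {x}) ^ n, u + x * v = y := by
  simp only [sup_pow_succ, Ideal.mul_sup, mul_left_comm L, Submodule.mem_sup,
    Ideal.mem_span_singleton_mul, exists_exists_and_eq_and]

/-- Every nonzerodivisor on `S / L`, for an ideal `L ≥ I`, is a nonzerodivisor on `Iⁿ / L Iⁿ`.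
This is the consequence of the freeness of `Iⁿ / Iⁿ⁺¹` over `S / I` that can be proved by adjoining
one generator of `I` at a time. -/
def PowersPreserveRegularity (I : Ideal S) : Prop :=
  ∀ ⦃L : Ideal S⦄ ⦃y : S⦄, I ≤ L → IsSMulRegular (S ⧸ L) y →
    ∀ n, ∀ u ∈ I ^ n, y * u ∈ L * I ^ n → u ∈ L * I ^ n

lemma powersPreserveRegularity_bot : PowersPreserveRegularity (⊥ : Ideal S) := by
  rintro L y - hy (_ | n) u hu hyu
  · simpa using mem_of_isSMulRegular_quotient_of_smul_mem hy (by simpa using hyu)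
  · simp_all

namespace PowersPreserveRegularity

variable {I : Ideal S} {x : S}

lemma isSMulRegular_quotient_pow (hI : PowersPreserveRegularity I)
    (hx : IsSMulRegular (S ⧸ I) x) (n : ℕ) : IsSMulRegular (S ⧸ I ^ n) x := by
  rw [isSMulRegular_quotient_iff_mem_of_smul_mem]
  intro s hs
  suffices ∀ m ≤ n, s ∈ I ^ m from this n le_rfl
  intro m
  induction m with
  | zero => simp
  | succ m ih =>
    intro hm
    rw [pow_succ']
    refine hI le_rfl hx m s (ih (by lia)) ?_
    rw [← pow_succ']
    exact Ideal.pow_le_pow_right hm hs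

lemma sup_span_singleton (hI : PowersPreserveRegularity I) (hx : IsSMulRegular (S ⧸ I) x) :
    PowersPreserveRegularity (I ⊔ Ideal.span {x}) := by
  intro L y hL hy n
  have hIL : I ≤ L := le_sup_left.trans hL
  have hxL : x ∈ L := hL (Ideal.mem_sup_right (Ideal.mem_span_singleton_self x))
  induction n with
  | zero => simpa using fun s ↦ mem_of_isSMulRegular_quotient_of_smul_mem hy
  | succ n ih =>
    intro s hs hys
    obtain ⟨u, hu, v, hv, rfl⟩ := mem_sup_span_singleton_pow_succ.mp hs
    obtain ⟨p, hp, q, hq, hpq⟩ := mem_mul_sup_span_singleton_pow_succ.mp hys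
    have hyvq : y * v - q ∈ I ^ (n + 1) := by
      refine mem_of_isSMulRegular_quotient_of_smul_mem (hI.isSMulRegular_quotient_pow hx _) ?_
      rw [smul_eq_mul, show x * (y * v - q) = p - y * u by linear_combination -hpq]
      exact sub_mem (Ideal.mul_le_right hp) (Ideal.mul_mem_left _ y hu)
    have hv' : v ∈ L * (I ⊔ Ideal.span {x}) ^ n := by
      refine ih v hv ?_
      have hle : I ^ (n + 1) ≤ L * (I ⊔ Ideal.span {x}) ^ n := by
        rw [pow_succ']
        exact Ideal.mul_mono hIL (Ideal.pow_right_mono le_sup_left n)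
      simpa using add_mem (hle hyvq) hq
    have hu' : u ∈ L * I ^ (n + 1) := by
      refine hI hIL hy (n + 1) u hu ?_
      rw [show y * u = p - x * (y * v - q) by linear_combination -hpq]
      exact sub_mem hp (Ideal.mul_mem_mul hxL hyvq)
    exact mem_mul_sup_span_singleton_pow_succ.mpr ⟨u, hu', v, hv', rfl⟩

end PowersPreserveRegularity

lemma isWeaklyRegular_concat_iff {rs : List S} {x : S} :
    RingTheory.Sequence.IsWeaklyRegular S (rs ++ [x]) ↔
      RingTheory.Sequence.IsWeaklyRegular S rs ∧ IsSMulRegular (S ⧸ Ideal.ofList rs) x := by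
  rw [RingTheory.Sequence.isWeaklyRegular_append_iff,
    RingTheory.Sequence.isWeaklyRegular_singleton_iff, smul_eq_mul, Ideal.mul_top]

lemma ofList_concat (rs : List S) (x : S) :
    Ideal.ofList (rs ++ [x]) = Ideal.ofList rs ⊔ Ideal.span {x} := by
  rw [Ideal.ofList_append, Ideal.ofList_singleton]

lemma powersPreserveRegularity_ofList {rs : List S}
    (hrs : RingTheory.Sequence.IsWeaklyRegular S rs) :
    PowersPreserveRegularity (Ideal.ofList rs) := by
  induction rs using List.reverseRecOn with
  | nil => simpa using powersPreserveRegularity_bot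
  | append_singleton rs x ih =>
    obtain ⟨hrs, hx⟩ := isWeaklyRegular_concat_iff.mp hrs
    simpa only [ofList_concat] using (ih hrs).sup_span_singleton hx

end PowerRegularity

section TensorHomology

variable {S : Type u} [CommRing S] (P : ChainComplex (ModuleCat.{u} S) ℕ)

/-- The functor `M ↦ M ⊗ P` from modules to chain complexes, for a fixed chain complex `P`. -/
noncomputable def tensorComplex : ModuleCat.{u} S ⥤ ChainComplex (ModuleCat.{u} S) ℕ where
  obj M := (((tensoringLeft (ModuleCat.{u} S)).obj M).mapHomologicalComplex _).obj P
  map f := (NatTrans.mapHomologicalComplex ((tensoringLeft (ModuleCat.{u} S)).map f) _).app P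

instance : (tensorComplex P).Additive where
  map_add {M N f g} := by
    ext i : 1
    exact MonoidalPreadditive.add_whiskerRight (X := P.X i) f g

lemma tensorComplex_map_shortExact [∀ i, Projective (P.X i)] {X : ShortComplex (ModuleCat.{u} S)}
    (hX : X.ShortExact) : (X.map (tensorComplex P)).ShortExact := by
  refine HomologicalComplex.shortExact_of_degreewise_shortExact _ fun i ↦ ?_
  have : Module.Projective S (P.X i) := (IsProjective.iff_projective (P.X i)).mpr inferInstance
  exact ModuleCat.shortComplex_shortExact _
    (rTensor_exact (P.X i)
      ((ShortComplex.ShortExact.moduleCat_exact_iff_function_exact _).mp hX.exact)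
      hX.moduleCat_surjective_g)
    (Module.Flat.rTensor_preserves_injective_linearMap X.f.hom hX.moduleCat_injective_f)
    (LinearMap.rTensor_surjective (P.X i) hX.moduleCat_surjective_g)

/-- The functor `M ↦ H_i(M ⊗ P)`, which computes `Tor_i(-, N)` when `P` is a projective resolution
of `N`. -/
noncomputable def tensorHomology (i : ℕ) : ModuleCat.{u} S ⥤ ModuleCat.{u} S :=
  tensorComplex P ⋙ HomologicalComplex.homologyFunctor _ _ i

instance (i : ℕ) : (tensorHomology P i).Additive :=
  inferInstanceAs (tensorComplex P ⋙ HomologicalComplex.homologyFunctor _ _ i).Additive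

section LongExactSequence

variable [∀ i, Projective (P.X i)] {X Y : ShortComplex (ModuleCat.{u} S)}

/-- The connecting map `H_{i+1}(X₃ ⊗ P) → H_i(X₁ ⊗ P)` of a short exact sequence `X`. -/
noncomputable def connecting (hX : X.ShortExact) (i : ℕ) :
    (tensorHomology P (i + 1)).obj X.X₃ ⟶ (tensorHomology P i).obj X.X₁ :=
  (tensorComplex_map_shortExact P hX).δ (i + 1) i rfl

lemma connecting_naturality (hX : X.ShortExact) (hY : Y.ShortExact) (φ : X ⟶ Y) (i : ℕ) :
    connecting P hX i ≫ (tensorHomology P i).map φ.τ₁ =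
      (tensorHomology P (i + 1)).map φ.τ₃ ≫ connecting P hY i :=
  HomologicalComplex.HomologySequence.δ_naturality ((tensorComplex P).mapShortComplex.map φ)
    (tensorComplex_map_shortExact P hX) (tensorComplex_map_shortExact P hY) (i + 1) i rfl

lemma range_map_g_eq_ker_connecting (hX : X.ShortExact) (i : ℕ) :
    LinearMap.range ((tensorHomology P (i + 1)).map X.g).hom =
      LinearMap.ker (connecting P hX i).hom :=
  ((tensorComplex_map_shortExact P hX).homology_exact₃ (i + 1) i rfl).moduleCat_range_eq_ker

lemma surjective_tensorHomology_zero_map_g (hX : X.ShortExact) :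
    Surjective ((tensorHomology P 0).map X.g).hom := by
  have := (tensorComplex_map_shortExact P hX).epi_g
  exact (ModuleCat.epi_iff_surjective _).mp <|
    HomologicalComplex.epi_homologyMap_of_epi_of_not_rel (X.map (tensorComplex P)).g 0 (by simp)

lemma injective_map_g_of_map_f_eq_zero (hX : X.ShortExact) {i : ℕ}
    (hf : (tensorHomology P i).map X.f = 0) : Injective ((tensorHomology P i).map X.g).hom :=
  (ModuleCat.mono_iff_injective _).mp
    (((tensorComplex_map_shortExact P hX).homology_exact₂ i).mono_g hf)

lemma surjective_connecting_of_map_f_eq_zero (hX : X.ShortExact) {i : ℕ}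
    (hf : (tensorHomology P i).map X.f = 0) : Surjective (connecting P hX i).hom :=
  (ModuleCat.epi_iff_surjective _).mp
    (((tensorComplex_map_shortExact P hX).homology_exact₁ (i + 1) i rfl).epi_f hf)

lemma length_tensorHomology_zero_X₃ (hX : X.ShortExact) (hf : (tensorHomology P 0).map X.f = 0) :
    Module.length S ((tensorHomology P 0).obj X.X₃) =
      Module.length S ((tensorHomology P 0).obj X.X₂) :=
  (LinearEquiv.ofBijective ((tensorHomology P 0).map X.g).hom
    ⟨injective_map_g_of_map_f_eq_zero P hX hf,
      surjective_tensorHomology_zero_map_g P hX⟩).length_eq.symm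

lemma length_tensorHomology_succ_X₃ (hX : X.ShortExact) {i : ℕ}
    (hf : (tensorHomology P i).map X.f = 0) (hf' : (tensorHomology P (i + 1)).map X.f = 0) :
    Module.length S ((tensorHomology P (i + 1)).obj X.X₃) =
      Module.length S ((tensorHomology P (i + 1)).obj X.X₂) +
        Module.length S ((tensorHomology P i).obj X.X₁) :=
  Module.length_eq_add_of_exact _ _ (injective_map_g_of_map_f_eq_zero P hX hf')
    (surjective_connecting_of_map_f_eq_zero P hX hf)
    (LinearMap.exact_iff.mpr (range_map_g_eq_ker_connecting P hX i).symm)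

end LongExactSequence

lemma length_functor_obj_prod (F : ModuleCat.{u} S ⥤ ModuleCat.{u} S) [F.Additive]
    (M N : Type u) [AddCommGroup M] [Module S M] [AddCommGroup N] [Module S N] :
    Module.length S (F.obj (.of S (M × N))) =
      Module.length S (F.obj (.of S M)) + Module.length S (F.obj (.of S N)) := by
  have := Limits.preservesBinaryBiproducts_of_preservesBiproducts F
  rw [← Module.length_prod]
  exact (F.mapIso (ModuleCat.biprodIsoProd (.of S M) (.of S N)).symm ≪≫ F.mapBiprod _ _ ≪≫
    ModuleCat.biprodIsoProd _ _).toLinearEquiv.length_eq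

end TensorHomology

section Resolution

variable {S : Type u} [CommRing S] {N : ModuleCat.{u} S} (P : ProjectiveResolution N)

/-- `Tor_i(M, N)` computed from a projective resolution of `N`. -/
noncomputable def torIso (i : ℕ) (M : ModuleCat.{u} S) :
    ((Tor (ModuleCat.{u} S) i).obj M).obj N ≅ (tensorHomology P.complex i).obj M :=
  P.isoLeftDerivedObj ((tensoringLeft (ModuleCat.{u} S)).obj M) i

/-- The isomorphism `S ⊗ P ≅ P` of chain complexes. -/
noncomputable def tensorComplexUnitIso :
    (tensorComplex P.complex).obj (𝟙_ (ModuleCat S)) ≅ P.complex :=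
  (NatIso.mapHomologicalComplex (leftUnitorNatIso (ModuleCat.{u} S)) _).app P.complex ≪≫
    (Functor.mapHomologicalComplexIdIso _ _).app P.complex

/-- `H_i(S ⊗ P)` is the homology of the complex with `N` in degree zero. -/
noncomputable def tensorHomologyUnitIso (i : ℕ) :
    (tensorHomology P.complex i).obj (.of S S) ≅
      ((ChainComplex.single₀ (ModuleCat.{u} S)).obj N).homology i :=
  HomologicalComplex.homologyMapIso (tensorComplexUnitIso P) i ≪≫
    asIso (HomologicalComplex.homologyMap P.π i)

lemma length_tensorHomology_zero_self :
    Module.length S ((tensorHomology P.complex 0).obj (.of S S)) = Module.length S N :=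
  (tensorHomologyUnitIso P 0 ≪≫
    HomologicalComplex.singleObjHomologySelfIso _ _ N).toLinearEquiv.length_eq

lemma subsingleton_tensorHomology_succ_self (i : ℕ) :
    Subsingleton ((tensorHomology P.complex (i + 1)).obj (.of S S)) :=
  ModuleCat.subsingleton_of_isZero <|
    (HomologicalComplex.isZero_single_obj_homology _ _ N _ (by simp)).of_iso
      (tensorHomologyUnitIso P (i + 1))

/-- Multiplication by an annihilator of `N` is null-homotopic on a projective resolution of `N`. -/
noncomputable def smulHomotopyZero {r : S} (hr : r ∈ Module.annihilator S N) :
    Homotopy (r • 𝟙 P.complex) 0 :=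
  ProjectiveResolution.liftHomotopyZero _ <| by
    rw [Linear.smul_comp, Category.id_comp]
    ext x
    exact Module.mem_annihilator.mp hr (P.π.f 0 x)

lemma tensorHomology_map_smul_eq_zero {r : S} (hr : r ∈ Module.annihilator S N)
    {M M' : ModuleCat.{u} S} (f : M ⟶ M') (i : ℕ) :
    (tensorHomology P.complex i).map (r • f) = 0 := by
  let mulR := (((tensoringLeft (ModuleCat.{u} S)).obj M').mapHomologicalComplex _).map
    (r • 𝟙 P.complex)
  have hfac : (tensorComplex P.complex).map (r • f) = (tensorComplex P.complex).map f ≫ mulR := by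
    ext j : 1
    change (r • f) ▷ P.complex.X j = f ▷ P.complex.X j ≫ M' ◁ (r • 𝟙 (P.complex.X j))
    simp
  have hnull : Homotopy mulR 0 :=
    (((tensoringLeft (ModuleCat.{u} S)).obj M').mapHomotopy (smulHomotopyZero P hr)).trans
      (.ofEq (Functor.map_zero _ _ _))
  have hzero : Homotopy ((tensorComplex P.complex).map (r • f)) 0 :=
    (Homotopy.ofEq hfac).trans <| (hnull.compLeft _).trans (.ofEq Limits.comp_zero)
  exact (hzero.homologyMap_eq i).trans (HomologicalComplex.homologyMap_zero _ _ _)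

end Resolution

section MayerVietoris

variable {S : Type u} [CommRing S]

/-- The inclusion `A → B` of ideals as a morphism of modules. -/
def inclusionHom {A B : Ideal S} (h : A ≤ B) : ModuleCat.of S A ⟶ ModuleCat.of S B :=
  ModuleCat.ofHom (Submodule.inclusion h)

/-- Multiplication by `t ∈ I` as a morphism `Iⁿ → Iⁿ⁺¹`. -/
def powMulHom {I : Ideal S} (t : I) (n : ℕ) :
    ModuleCat.of S ↥(I ^ n) ⟶ ModuleCat.of S ↥(I ^ (n + 1)) :=
  ModuleCat.ofHom <| (LinearMap.lsmul S S t).restrict fun u hu ↦ by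
    rw [pow_succ']
    exact Ideal.mul_mem_mul t.2 hu

lemma powMulHom_comp_inclusionHom_pow {I K : Ideal S} (h : I ≤ K) (t : I) (n : ℕ) :
    powMulHom t n ≫ inclusionHom (Ideal.pow_right_mono h (n + 1)) =
      inclusionHom (Ideal.pow_right_mono h n) ≫ powMulHom (Submodule.inclusion h t) n := rfl

lemma powMulHom_comp_inclusionHom_pow_le_pow {I : Ideal S} (t : I) (n : ℕ) :
    powMulHom t n ≫ inclusionHom (Ideal.pow_le_pow_right (Nat.le_add_right n 1)) =
      (t : S) • 𝟙 _ := rfl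

lemma mem_sup_span_singleton_self (I : Ideal S) (x : S) : x ∈ I ⊔ Ideal.span {x} :=
  Ideal.mem_sup_right (Ideal.mem_span_singleton_self x)

/-- The sequence `0 → Iⁿ⁺¹ → Iⁿ⁺¹ × Kⁿ → Kⁿ⁺¹ → 0` for `K = I ⊔ (x)`, with maps `u ↦ (-xu, u)` and
`(u, v) ↦ u + xv`. -/
abbrev mayerVietoris (I : Ideal S) (x : S) (n : ℕ) : ShortComplex (ModuleCat.{u} S) where
  X₁ := .of S ↥(I ^ (n + 1))
  X₂ := .of S (↥(I ^ (n + 1)) × ↥((I ⊔ Ideal.span {x}) ^ n))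
  X₃ := .of S ↥((I ⊔ Ideal.span {x}) ^ (n + 1))
  f := ModuleCat.ofHom <| LinearMap.prod (-(x • LinearMap.id)) <|
    (inclusionHom (Ideal.pow_le_pow_right (Nat.le_add_right n 1)) ≫
      inclusionHom (Ideal.pow_right_mono le_sup_left n)).hom
  g := ModuleCat.ofHom (LinearMap.fst S _ _) ≫
      inclusionHom (Ideal.pow_right_mono le_sup_left (n + 1)) +
    ModuleCat.ofHom (LinearMap.snd S _ _) ≫ powMulHom ⟨x, mem_sup_span_singleton_self I x⟩ n
  zero := by
    ext u
    exact neg_add_cancel (x * (u : S))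

lemma mayerVietoris_f (I : Ideal S) (x : S) (n : ℕ) :
    (mayerVietoris I x n).f =
      inclusionHom (Ideal.pow_le_pow_right (Nat.le_add_right n 1)) ≫
          inclusionHom (Ideal.pow_right_mono le_sup_left n) ≫
            ModuleCat.ofHom (LinearMap.inr S _ _) -
        x • ModuleCat.ofHom (LinearMap.inl S _ _) :=
  ModuleCat.hom_ext <| LinearMap.ext fun _ ↦ Prod.ext (zero_sub _).symm <|
    (sub_eq_self.mpr (smul_zero x)).symm

lemma mayerVietoris_shortExact {I : Ideal S} {x : S} {n : ℕ}
    (hx : IsSMulRegular (S ⧸ I ^ (n + 1)) x) : (mayerVietoris I x n).ShortExact := by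
  refine ModuleCat.shortComplex_shortExact _ ?_ ?_ ?_
  · rintro ⟨u, v⟩
    refine ⟨fun huv ↦ ?_, ?_⟩
    · have huv : (u : S) + x * v = 0 := congrArg Subtype.val huv
      have hv : (v : S) ∈ I ^ (n + 1) := by
        refine mem_of_isSMulRegular_quotient_of_smul_mem hx ?_
        rw [smul_eq_mul, ← neg_eq_of_add_eq_zero_right huv]
        exact neg_mem u.2
      exact ⟨⟨v, hv⟩, Prod.ext (Subtype.ext (neg_eq_of_add_eq_zero_left huv)) rfl⟩
    · rintro ⟨w, hw⟩
      rw [← hw]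
      exact (mayerVietoris I x n).moduleCat_zero_apply w
  · exact fun u v huv ↦ Subtype.ext (congrArg (fun w ↦ (w.2 : S)) huv)
  · rintro ⟨y, hy⟩
    obtain ⟨u, hu, v, hv, rfl⟩ := mem_sup_span_singleton_pow_succ.mp hy
    exact ⟨(⟨u, hu⟩, ⟨v, hv⟩), rfl⟩

/-- Multiplication by `t ∈ I` as a morphism between consecutive Mayer–Vietoris sequences. -/
def mayerVietorisMul {I : Ideal S} (t : I) (x : S) (n : ℕ) :
    mayerVietoris I x n ⟶ mayerVietoris I x (n + 1) where
  τ₁ := powMulHom t (n + 1)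
  τ₂ := ModuleCat.ofHom (LinearMap.prodMap (powMulHom t (n + 1)).hom
    (powMulHom (Submodule.inclusion le_sup_left t) n).hom)
  τ₃ := powMulHom (Submodule.inclusion le_sup_left t) (n + 1)
  comm₁₂ := ModuleCat.hom_ext <| LinearMap.ext fun u ↦
    Prod.ext (Subtype.ext (by change -(x * (t * u.1)) = t * -(x * u.1); ring)) rfl
  comm₂₃ := ModuleCat.hom_ext <| LinearMap.ext fun w ↦
    Subtype.ext (by change t * w.1.1 + x * (t * w.2.1) = t * (w.1.1 + x * w.2.1); ring)

end MayerVietoris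

section PowersOfIdeals

variable {S : Type u} [CommRing S] {N : ModuleCat.{u} S} (P : ProjectiveResolution N)

/-- The identification `I⁰ = S`. -/
noncomputable def powZeroIso (I : Ideal S) : ModuleCat.of S ↥(I ^ 0) ≅ .of S S :=
  (LinearEquiv.ofEq (I ^ 0) ⊤ (by rw [pow_zero, Ideal.one_eq_top]) ≪≫ₗ
    Submodule.topEquiv).toModuleIso

lemma length_tensorHomology_zero_pow_zero (I : Ideal S) :
    Module.length S ((tensorHomology P.complex 0).obj (.of S ↥(I ^ 0))) = Module.length S N :=
  ((tensorHomology P.complex 0).mapIso (powZeroIso I)).toLinearEquiv.length_eq.trans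
    (length_tensorHomology_zero_self P)

lemma subsingleton_tensorHomology_succ_pow_zero (I : Ideal S) (i : ℕ) :
    Subsingleton ((tensorHomology P.complex (i + 1)).obj (.of S ↥(I ^ 0))) := by
  have := subsingleton_tensorHomology_succ_self P i
  exact ((tensorHomology P.complex (i + 1)).mapIso (powZeroIso I)).toLinearEquiv.subsingleton

lemma subsingleton_tensorHomology_bot_pow_succ (P : ChainComplex (ModuleCat.{u} S) ℕ) (n i : ℕ) :
    Subsingleton ((tensorHomology P i).obj (.of S ↥((⊥ : Ideal S) ^ (n + 1)))) := by
  have : Subsingleton ↥((⊥ : Ideal S) ^ (n + 1)) := by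
    rw [← Ideal.zero_eq_bot, zero_pow n.succ_ne_zero, Ideal.zero_eq_bot]
    infer_instance
  exact ModuleCat.subsingleton_of_isZero
    (Functor.map_isZero _ (ModuleCat.isZero_of_subsingleton _))

/-- The submodule of `H_i(Iⁿ⁺¹ ⊗ P)` generated by the images of `H_i(Iⁿ ⊗ P)` under multiplication
by the elements of `I`. -/
noncomputable def mulSubmodule (P : ChainComplex (ModuleCat.{u} S) ℕ) (I : Ideal S) (n i : ℕ) :
    Submodule S ((tensorHomology P i).obj (.of S ↥(I ^ (n + 1)))) :=
  ⨆ t : I, LinearMap.range ((tensorHomology P i).map (powMulHom t n)).hom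

/-- `H_i(Iⁿ⁺¹ ⊗ P)` is generated by the multiples `t · H_i(Iⁿ ⊗ P)` with `t ∈ I`. The case `n = 0`,
`i > 0` is excluded because `H_i(I⁰ ⊗ P) = 0` for a resolution `P`, whereas `H_i(I ⊗ P)` need not
vanish. -/
def MulGeneratesTor (P : ChainComplex (ModuleCat.{u} S) ℕ) (I : Ideal S) : Prop :=
  ∀ n i : ℕ, n ≠ 0 ∨ i = 0 → mulSubmodule P I n i = ⊤

lemma mulGeneratesTor_bot (P : ChainComplex (ModuleCat.{u} S) ℕ) :
    MulGeneratesTor P (⊥ : Ideal S) := fun n i _ ↦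
  have := subsingleton_tensorHomology_bot_pow_succ P n i
  Subsingleton.elim _ _

lemma mulSubmodule_le {P : ChainComplex (ModuleCat.{u} S) ℕ} {I : Ideal S} {n i : ℕ}
    {W : Submodule S ((tensorHomology P i).obj (.of S ↥(I ^ (n + 1))))} :
    mulSubmodule P I n i ≤ W ↔
      ∀ (t : I) y, ((tensorHomology P i).map (powMulHom t n)).hom y ∈ W := by
  simp only [mulSubmodule, iSup_le_iff, LinearMap.range_le_iff_comap, Submodule.eq_top_iff',
    Submodule.mem_comap]

lemma map_mem_mulSubmodule (P : ChainComplex (ModuleCat.{u} S) ℕ) {I : Ideal S} (n i : ℕ) (t : I)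
    (y : (tensorHomology P i).obj (.of S ↥(I ^ n))) :
    ((tensorHomology P i).map (powMulHom t n)).hom y ∈ mulSubmodule P I n i :=
  mulSubmodule_le.mp le_rfl t y

variable {I : Ideal S} {x : S}

lemma map_inclusion_pow_eq_zero (hN : I ≤ Module.annihilator S N)
    (hI : MulGeneratesTor P.complex I) (n i : ℕ) :
    (tensorHomology P.complex i).map
      (inclusionHom (Ideal.pow_le_pow_right (Nat.le_add_right n 1) : I ^ (n + 1) ≤ I ^ n)) = 0 := by
  obtain ⟨rfl, hi⟩ | hni : (n = 0 ∧ i ≠ 0) ∨ (n ≠ 0 ∨ i = 0) := by tauto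
  · obtain ⟨i, rfl⟩ := Nat.exists_eq_succ_of_ne_zero hi
    have := subsingleton_tensorHomology_succ_pow_zero P I i
    ext y
    exact Subsingleton.elim _ _
  · refine ModuleCat.hom_ext (LinearMap.ker_eq_top.mp (top_le_iff.mp ?_))
    rw [← hI n i hni, mulSubmodule_le]
    intro t y
    rw [LinearMap.mem_ker, ← LinearMap.comp_apply, ← ModuleCat.hom_comp, ← Functor.map_comp,
      powMulHom_comp_inclusionHom_pow_le_pow, tensorHomology_map_smul_eq_zero P (hN t.2)]
    rfl

lemma map_mayerVietoris_f_eq_zero (hN : I ⊔ Ideal.span {x} ≤ Module.annihilator S N)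
    (hI : MulGeneratesTor P.complex I) (n i : ℕ) :
    (tensorHomology P.complex i).map (mayerVietoris I x n).f = 0 := by
  rw [mayerVietoris_f, Functor.map_sub, Functor.map_comp,
    map_inclusion_pow_eq_zero P (le_sup_left.trans hN) hI,
    tensorHomology_map_smul_eq_zero P (hN (mem_sup_span_singleton_self I x)), Limits.zero_comp,
    sub_zero]

lemma map_inclusionHom_mem_mulSubmodule {P : ChainComplex (ModuleCat.{u} S) ℕ}
    (hI : MulGeneratesTor P I) {K : Ideal S} (hIK : I ≤ K) {n i : ℕ} (hni : n ≠ 0 ∨ i = 0)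
    (y : (tensorHomology P i).obj (.of S ↥(I ^ (n + 1)))) :
    ((tensorHomology P i).map
      (inclusionHom (Ideal.pow_right_mono hIK (n + 1)))).hom y ∈ mulSubmodule P K n i := by
  suffices mulSubmodule P I n i ≤ (mulSubmodule P K n i).comap
      ((tensorHomology P i).map (inclusionHom (Ideal.pow_right_mono hIK (n + 1)))).hom from
    this (hI n i hni ▸ Submodule.mem_top)
  rw [mulSubmodule_le]
  intro t z
  rw [Submodule.mem_comap, ← LinearMap.comp_apply, ← ModuleCat.hom_comp, ← Functor.map_comp,
    powMulHom_comp_inclusionHom_pow hIK, Functor.map_comp]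
  exact map_mem_mulSubmodule P n i _ _

lemma range_map_mayerVietoris_g_le_mulSubmodule {P : ChainComplex (ModuleCat.{u} S) ℕ}
    (hI : MulGeneratesTor P I) (x : S) {n i : ℕ} (hni : n ≠ 0 ∨ i = 0) :
    LinearMap.range ((tensorHomology P i).map (mayerVietoris I x n).g).hom ≤
      mulSubmodule P (I ⊔ Ideal.span {x}) n i := by
  rintro _ ⟨y, rfl⟩
  simp only [mayerVietoris, Functor.map_add, Functor.map_comp]
  exact add_mem (map_inclusionHom_mem_mulSubmodule hI le_sup_left hni _)
    (map_mem_mulSubmodule P n i _ _)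

/- The connecting map commutes with multiplication by `t ∈ I` and is surjective one power below, so
its image contains every generator `t · H_i(Iⁿ⁺¹ ⊗ P)`. -/
lemma map_connecting_mulSubmodule_eq_top (hN : I ⊔ Ideal.span {x} ≤ Module.annihilator S N)
    (hI : MulGeneratesTor P.complex I) (hx : ∀ n, IsSMulRegular (S ⧸ I ^ n) x) (n i : ℕ) :
    (mulSubmodule P.complex (I ⊔ Ideal.span {x}) (n + 1) (i + 1)).map
      (connecting P.complex (mayerVietoris_shortExact (hx (n + 2))) i).hom = ⊤ := by
  rw [← top_le_iff, ← hI (n + 1) i (.inl n.succ_ne_zero), mulSubmodule_le]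
  intro t y
  obtain ⟨z, rfl⟩ := surjective_connecting_of_map_f_eq_zero P.complex
    (mayerVietoris_shortExact (hx (n + 1))) (map_mayerVietoris_f_eq_zero P hN hI n i) y
  have hcomm := connecting_naturality P.complex (mayerVietoris_shortExact (hx (n + 1)))
    (mayerVietoris_shortExact (hx (n + 2))) (mayerVietorisMul t x n) i
  exact ⟨_, map_mem_mulSubmodule P.complex _ _ _ z, (ConcreteCategory.congr_hom hcomm z).symm⟩

lemma MulGeneratesTor.sup_span_singleton {P : ProjectiveResolution N}
    (hI : MulGeneratesTor P.complex I) (hN : I ⊔ Ideal.span {x} ≤ Module.annihilator S N)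
    (hx : ∀ n, IsSMulRegular (S ⧸ I ^ n) x) :
    MulGeneratesTor P.complex (I ⊔ Ideal.span {x}) := by
  intro n i hni
  have hg := range_map_mayerVietoris_g_le_mulSubmodule hI x hni
  rcases i with _ | i
  · have hsurj := surjective_tensorHomology_zero_map_g P.complex
      (mayerVietoris_shortExact (hx (n + 1)))
    rwa [LinearMap.range_eq_top.mpr hsurj, top_le_iff] at hg
  · obtain ⟨n, rfl⟩ := Nat.exists_eq_succ_of_ne_zero (hni.resolve_right i.succ_ne_zero)
    rw [range_map_g_eq_ker_connecting P.complex (mayerVietoris_shortExact (hx (n + 2)))] at hg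
    rw [← sup_eq_left.mpr hg, ← Submodule.comap_map_eq,
      map_connecting_mulSubmodule_eq_top P hN hI hx, Submodule.comap_top]

end PowersOfIdeals

section Length

variable {S : Type u} [CommRing S] {N : ModuleCat.{u} S} (P : ProjectiveResolution N)

variable {I : Ideal S} {x : S}

lemma length_tensorHomology_zero_sup_pow_succ (hN : I ⊔ Ideal.span {x} ≤ Module.annihilator S N)
    (hI : MulGeneratesTor P.complex I) {n : ℕ} (hx : IsSMulRegular (S ⧸ I ^ (n + 1)) x) :
    Module.length S ((tensorHomology P.complex 0).obj
        (.of S ↥((I ⊔ Ideal.span {x}) ^ (n + 1)))) =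
      Module.length S ((tensorHomology P.complex 0).obj (.of S ↥(I ^ (n + 1)))) +
        Module.length S ((tensorHomology P.complex 0).obj
          (.of S ↥((I ⊔ Ideal.span {x}) ^ n))) :=
  (length_tensorHomology_zero_X₃ P.complex (mayerVietoris_shortExact hx)
    (map_mayerVietoris_f_eq_zero P hN hI n 0)).trans (length_functor_obj_prod _ _ _)

lemma length_tensorHomology_succ_sup_pow_succ (hN : I ⊔ Ideal.span {x} ≤ Module.annihilator S N)
    (hI : MulGeneratesTor P.complex I) {n : ℕ} (hx : IsSMulRegular (S ⧸ I ^ (n + 1)) x) (i : ℕ) :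
    Module.length S ((tensorHomology P.complex (i + 1)).obj
        (.of S ↥((I ⊔ Ideal.span {x}) ^ (n + 1)))) =
      Module.length S ((tensorHomology P.complex (i + 1)).obj (.of S ↥(I ^ (n + 1)))) +
        Module.length S ((tensorHomology P.complex (i + 1)).obj
          (.of S ↥((I ⊔ Ideal.span {x}) ^ n))) +
        Module.length S ((tensorHomology P.complex i).obj (.of S ↥(I ^ (n + 1)))) := by
  rw [← length_functor_obj_prod]
  exact length_tensorHomology_succ_X₃ P.complex (mayerVietoris_shortExact hx)
    (map_mayerVietoris_f_eq_zero P hN hI n i) (map_mayerVietoris_f_eq_zero P hN hI n (i + 1))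

/-- The `i`-th Betti number of `Jⁿ` for an ideal `J` generated by a regular sequence of length `d`.
The truncated subtractions give the Betti numbers `1, 0, 0, …` of `J⁰ = S` when `n = 0`. -/
def powBetti (d n i : ℕ) : ℕ := (n + d - 1).choose (n + i) * (n + i - 1).choose i

lemma powBetti_zero_left (n i : ℕ) : powBetti 0 (n + 1) i = 0 := by
  rw [powBetti, Nat.choose_eq_zero_of_lt (by lia), zero_mul]

lemma powBetti_pow_zero_zero (d : ℕ) : powBetti d 0 0 = 1 := by simp [powBetti]

lemma powBetti_pow_zero_succ (d i : ℕ) : powBetti d 0 (i + 1) = 0 := by simp [powBetti]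

lemma powBetti_succ_succ_zero (d n : ℕ) :
    powBetti (d + 1) (n + 1) 0 = powBetti d (n + 1) 0 + powBetti (d + 1) n 0 := by
  simp only [powBetti, Nat.choose_zero_right, mul_one, add_zero, ← add_assoc,
    Nat.add_sub_cancel, add_right_comm n 1 d, Nat.choose_succ_succ']
  ring

lemma powBetti_succ_succ_succ (d n i : ℕ) :
    powBetti (d + 1) (n + 1) (i + 1) =
      powBetti d (n + 1) (i + 1) + powBetti (d + 1) n (i + 1) + powBetti d (n + 1) i := by
  simp only [powBetti, ← add_assoc, Nat.add_sub_cancel, add_right_comm n 1,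
    Nat.choose_succ_succ']
  ring

theorem mulGeneratesTor_ofList {rs : List S} (hrs : RingTheory.Sequence.IsWeaklyRegular S rs)
    (hN : Ideal.ofList rs ≤ Module.annihilator S N) :
    MulGeneratesTor P.complex (Ideal.ofList rs) := by
  induction rs using List.reverseRecOn with
  | nil => simpa only [Ideal.ofList_nil] using mulGeneratesTor_bot P.complex
  | append_singleton rs x ih =>
    obtain ⟨hrs, hx⟩ := isWeaklyRegular_concat_iff.mp hrs
    rw [ofList_concat] at hN ⊢
    exact (ih hrs (le_sup_left.trans hN)).sup_span_singleton hN
      ((powersPreserveRegularity_ofList hrs).isSMulRegular_quotient_pow hx)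

lemma length_tensorHomology_pow_zero (I : Ideal S) (d i : ℕ) :
    Module.length S ((tensorHomology P.complex i).obj (.of S ↥(I ^ 0))) =
      powBetti d 0 i * Module.length S N := by
  rcases i with _ | i
  · rw [length_tensorHomology_zero_pow_zero, powBetti_pow_zero_zero, Nat.cast_one, one_mul]
  · have := subsingleton_tensorHomology_succ_pow_zero P I i
    rw [powBetti_pow_zero_succ, Nat.cast_zero, zero_mul, Module.length_eq_zero]

lemma length_tensorHomology_bot_pow (n i : ℕ) :
    Module.length S ((tensorHomology P.complex i).obj (.of S ↥((⊥ : Ideal S) ^ n))) =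
      powBetti 0 n i * Module.length S N := by
  rcases n with _ | n
  · exact length_tensorHomology_pow_zero P ⊥ 0 i
  · have := subsingleton_tensorHomology_bot_pow_succ P.complex n i
    rw [powBetti_zero_left, Nat.cast_zero, zero_mul, Module.length_eq_zero]

lemma length_tensorHomology_sup_pow (hN : I ⊔ Ideal.span {x} ≤ Module.annihilator S N)
    (hI : MulGeneratesTor P.complex I) (hx : ∀ n, IsSMulRegular (S ⧸ I ^ n) x) {d : ℕ}
    (hlen : ∀ n i, Module.length S ((tensorHomology P.complex i).obj (.of S ↥(I ^ n))) =
      powBetti d n i * Module.length S N) (n i : ℕ) :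
    Module.length S ((tensorHomology P.complex i).obj (.of S ↥((I ⊔ Ideal.span {x}) ^ n))) =
      powBetti (d + 1) n i * Module.length S N := by
  induction n generalizing i with
  | zero => exact length_tensorHomology_pow_zero P _ (d + 1) i
  | succ n ih =>
    rcases i with _ | i
    · rw [length_tensorHomology_zero_sup_pow_succ P hN hI (hx (n + 1)), hlen, ih,
        powBetti_succ_succ_zero, Nat.cast_add, add_mul]
    · rw [length_tensorHomology_succ_sup_pow_succ P hN hI (hx (n + 1)), hlen, hlen, ih,
        powBetti_succ_succ_succ, Nat.cast_add, Nat.cast_add, add_mul, add_mul]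

theorem length_tensorHomology_ofList_pow {rs : List S}
    (hrs : RingTheory.Sequence.IsWeaklyRegular S rs)
    (hN : Ideal.ofList rs ≤ Module.annihilator S N) (n i : ℕ) :
    Module.length S ((tensorHomology P.complex i).obj (.of S ↥(Ideal.ofList rs ^ n))) =
      powBetti rs.length n i * Module.length S N := by
  induction rs using List.reverseRecOn generalizing n i with
  | nil =>
    rw [Ideal.ofList_nil]
    exact length_tensorHomology_bot_pow P n i
  | append_singleton rs x ih =>
    obtain ⟨hrs, hx⟩ := isWeaklyRegular_concat_iff.mp hrs
    rw [ofList_concat] at hN ⊢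
    have hN' := le_sup_left.trans hN
    rw [List.length_append, List.length_singleton]
    exact length_tensorHomology_sup_pow P hN (mulGeneratesTor_ofList P hrs hN')
      ((powersPreserveRegularity_ofList hrs).isSMulRegular_quotient_pow hx) (ih hrs hN') n i

/-- The sequence `0 → A → S → S / A → 0`. -/
abbrev quotientSequence (A : Ideal S) : ShortComplex (ModuleCat.{u} S) where
  X₁ := .of S A
  X₂ := .of S S
  X₃ := .of S (S ⧸ A)
  f := ModuleCat.ofHom A.subtype
  g := ModuleCat.ofHom A.mkQ
  zero := ModuleCat.hom_ext (LinearMap.exact_subtype_mkQ A).linearMap_comp_eq_zero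

lemma quotientSequence_shortExact (A : Ideal S) : (quotientSequence A).ShortExact :=
  ModuleCat.shortComplex_shortExact _ (LinearMap.exact_subtype_mkQ A) A.injective_subtype
    A.mkQ_surjective

lemma map_quotientSequence_pow_f_eq_zero (hN : I ≤ Module.annihilator S N)
    (hI : MulGeneratesTor P.complex I) (n i : ℕ) :
    (tensorHomology P.complex i).map (quotientSequence (I ^ (n + 1))).f = 0 := by
  have hfac : (quotientSequence (I ^ (n + 1))).f =
      inclusionHom (Ideal.pow_le_pow_right (Nat.le_add_left 1 n) : I ^ (n + 1) ≤ I ^ (0 + 1)) ≫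
        inclusionHom (Ideal.pow_le_pow_right (Nat.le_add_right 0 1)) ≫ (powZeroIso I).hom := rfl
  rw [hfac, Functor.map_comp, Functor.map_comp, map_inclusion_pow_eq_zero P hN hI,
    Limits.zero_comp, Limits.comp_zero]

lemma length_tensorHomology_succ_quotient_pow_succ (hN : I ≤ Module.annihilator S N)
    (hI : MulGeneratesTor P.complex I) (n i : ℕ) :
    Module.length S ((tensorHomology P.complex (i + 1)).obj (.of S (S ⧸ I ^ (n + 1)))) =
      Module.length S ((tensorHomology P.complex i).obj (.of S ↥(I ^ (n + 1)))) := by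
  have hlen := length_tensorHomology_succ_X₃ P.complex (quotientSequence_shortExact (I ^ (n + 1)))
    (map_quotientSequence_pow_f_eq_zero P hN hI n i)
    (map_quotientSequence_pow_f_eq_zero P hN hI n (i + 1))
  have hzero : Module.length S ((tensorHomology P.complex (i + 1)).obj (.of S S)) = 0 :=
    Module.length_eq_zero_iff.mpr (subsingleton_tensorHomology_succ_self P i)
  simpa only [hzero, zero_add] using hlen

end Length

section Tor

variable {S : Type u} [CommRing S]

lemma ofList_ofFn {d : ℕ} (a : Fin d → S) :
    Ideal.ofList (List.ofFn a) = Ideal.span (Set.range a) := by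
  simp only [Ideal.ofList, List.mem_ofFn']
  rfl

lemma powBetti_eq_choose_mul_choose {d n i : ℕ} (hi : i < d) :
    powBetti d (n + 1) i = (n + d).choose (d - (i + 1)) * (n + i).choose i := by
  rw [powBetti, ← Nat.choose_symm_of_eq_add (show n + d = (n + 1 + i) + (d - (i + 1)) by lia)]
  congr 2 <;> lia

theorem length_tor_quotient_pow_succ {rs : List S} (hrs : RingTheory.Sequence.IsWeaklyRegular S rs)
    {N : ModuleCat.{u} S} (hN : Ideal.ofList rs ≤ Module.annihilator S N) (n i : ℕ) :
    Module.length S (((Tor (ModuleCat.{u} S) (i + 1)).obj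
        (.of S (S ⧸ Ideal.ofList rs ^ (n + 1)))).obj N) =
      powBetti rs.length (n + 1) i * Module.length S N := by
  let P := ProjectiveResolution.of N
  rw [(torIso P (i + 1) _).toLinearEquiv.length_eq, length_tensorHomology_succ_quotient_pow_succ
    P hN (mulGeneratesTor_ofList P hrs hN), length_tensorHomology_ofList_pow P hrs hN]

end Tor

section LocalRing

variable {S : Type u} [CommRing S] [IsLocalRing S]

lemma ofList_le_annihilator_residueField {rs : List S}
    (hrs : RingTheory.Sequence.IsRegular S rs) :
    Ideal.ofList rs ≤ Module.annihilator S (ResidueField S) := by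
  refine le_trans ?_ (Ideal.annihilator_quotient (I := maximalIdeal S)).ge
  refine IsLocalRing.le_maximalIdeal fun h ↦ hrs.top_ne_smul ?_
  rw [h, smul_eq_mul, Ideal.mul_top]

lemma length_residueField : Module.length S (ResidueField S) = 1 := by
  rw [Module.length_eq_one_iff]
  exact isSimpleModule_iff_isCoatom.mpr (maximalIdeal.isMaximal S).out

end LocalRing

end EagonNorthcott

theorem stmt_7_general (S : Type u) [CommRing S] (d : ℕ) (a : Fin d → S)
    (hreg : RingTheory.Sequence.IsWeaklyRegular S (List.ofFn a))
    (J : Ideal S) (hJ : J = Ideal.span (Set.range a))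
    (N : Type u) [AddCommGroup N] [Module S N] (hN : J ≤ Module.annihilator S N) :
    ∀ n i : ℕ, 1 ≤ n → 1 ≤ i → i ≤ d →
      mlen S (((Tor (ModuleCat.{u} S) i).obj (ModuleCat.of S (S ⧸ J ^ n))).obj (ModuleCat.of S N))
        = ((((n + d - 1).choose (d - i) * (n + i - 2).choose (i - 1) : ℕ) : ℕ∞) : WithBot ℕ∞) *
            mlen S N := by
  intro n i hn hi hid
  obtain ⟨n, rfl⟩ := Nat.exists_eq_add_of_le' hn
  obtain ⟨i, rfl⟩ := Nat.exists_eq_add_of_le' hi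
  subst hJ
  rw [← EagonNorthcott.ofList_ofFn] at hN ⊢
  have hlen := EagonNorthcott.length_tor_quotient_pow_succ hreg (N := .of S N) hN n i
  rw [List.length_ofFn, EagonNorthcott.powBetti_eq_choose_mul_choose hid] at hlen
  rw [mlen, mlen, ← Module.coe_length, ← Module.coe_length, hlen, ← WithBot.coe_mul]
  congr <;> lia

/-- **Eagon–Northcott.** If `J = (a₁,…,a_d)` is generated by a regular sequence in a Noetherian
local ring `S`, then for `n ≥ 1` and `1 ≤ i ≤ d` the `i`-th Betti number of `S/Jⁿ` equals
`C(n+d-1, d-i)·C(n+i-2, i-1)`. -/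
theorem stmt_7 (S : Type u) [CommRing S] [IsLocalRing S] [IsNoetherianRing S]
    (d : ℕ) (a : Fin d → S) (hreg : RingTheory.Sequence.IsRegular S (List.ofFn a))
    (J : Ideal S) (hJ : J = Ideal.span (Set.range a)) :
    ∀ n i : ℕ, 1 ≤ n → 1 ≤ i → i ≤ d →
      mlen S (((Tor (ModuleCat.{u} S) i).obj (ModuleCat.of S (S ⧸ J ^ n))).obj
          (ModuleCat.of S (IsLocalRing.ResidueField S)))
        = ((((n + d - 1).choose (d - i) * (n + i - 2).choose (i - 1) : ℕ) : ℕ∞) :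
            WithBot ℕ∞) := by
  intro n i hn hi hid
  have hJk : J ≤ Module.annihilator S (ResidueField S) := by
    rw [hJ, ← EagonNorthcott.ofList_ofFn]
    exact EagonNorthcott.ofList_le_annihilator_residueField hreg
  have hk : mlen S (ResidueField S) = 1 := by
    rw [mlen, ← Module.coe_length, EagonNorthcott.length_residueField, WithBot.coe_one]
  rw [stmt_7_general S d a hreg.toIsWeaklyRegular J hJ _ hJk n i hn hi hid, hk, mul_one]
end

section
/- Let (S,n) be a regular local ring, I₁,...,I_g Cohen-Macaulay ideals of height h with Iᵢ + Iⱼ n-primary for i ≠ j, R = S/(I₁ ∩ ... ∩ I_g) of dimension d ≥ 2, J = (a₁,...,a_d) with images forming a system of parameters of R, K = JR, and L = [⊕ᵢ S/Iᵢ]/R. If J ⊆ ann(L), then eᵢ(K) = (-1)ⁱ·λ(L) for i = 1,...,d-1 and e_d(K) = 0; in particular e₁(K) = -λ(L) < 0. -/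
open IsLocalRing Filter Function CategoryTheory

universe u

/-!
Put `F = ⊕ᵢ S/Iᵢ` and view `R` as the diagonal in `F`, so that `L = F/R`. The ring `S` is regular,
hence Cohen–Macaulay, so `dim S/I + ht I = dim S` for every proper ideal `I`; as all `Iᵢ` have
height `h`, each `S/Iᵢ` has depth at least `d`, and `a₁, …, a_d` is `F`-regular.

For an `F`-regular sequence generating `J` and any submodule `N ⊇ JF`, the module `JⁿF/JⁿN` is a
direct sum of `C(n+d-1, d-1)` copies of `F/N`. Since `J` kills `L`, this applies to `N = R` as well
as to `N = JF`. Computing `λ(F/JⁿR)` once through `R` and once through `JⁿF` gives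
`λ(L) + λ(R/JⁿR) = C(n+d-1, d) λ(F/JF) + C(n+d-1, d-1) λ(L)`, and the Hilbert coefficients are read
off from this polynomial.
-/

section HilbertPolynomial

lemma hsPoly_succ_sub (d : ℕ) (e : ℕ → ℤ) (n : ℕ) :
    hsPoly (d + 1) e (n + 1) - hsPoly (d + 1) e n = hsPoly d e (n + 1) := by
  rw [hsPoly, hsPoly, Finset.sum_range_succ, Finset.sum_range_succ _ (d + 1), hsPoly]
  simp only [Nat.sub_self, Nat.choose_zero_right, add_sub_add_right_eq_sub,
    ← Finset.sum_sub_distrib]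
  refine Finset.sum_congr rfl fun i hi ↦ ?_
  have hi : i ≤ d := Finset.mem_range_succ_iff.mp hi
  have pascal := Nat.choose_succ_succ (n + d - i) (d - i)
  rw [show n + 1 + (d + 1) - 1 - i = n + d - i + 1 by omega,
    show n + (d + 1) - 1 - i = n + d - i by omega,
    show n + 1 + d - 1 - i = n + d - i by omega,
    show d + 1 - i = d - i + 1 by omega, pascal]
  push_cast
  ring

theorem eq_of_eventually_hsPoly_eq {d : ℕ} {e e' : ℕ → ℤ}
    (h : ∀ᶠ n in atTop, hsPoly d e n = hsPoly d e' n) : ∀ i ≤ d, e i = e' i := by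
  induction d with
  | zero =>
    obtain ⟨n, hn⟩ := h.exists
    simpa [hsPoly] using hn
  | succ d ih =>
    have hlow : ∀ i ≤ d, e i = e' i := by
      refine ih ?_
      rw [← map_add_atTop_eq_nat 1, eventually_map]
      filter_upwards [h, (tendsto_add_atTop_nat 1).eventually h] with n hn hn'
      rw [← hsPoly_succ_sub d e, ← hsPoly_succ_sub d e', hn, hn']
    have htop : e (d + 1) = e' (d + 1) := by
      obtain ⟨n, hn⟩ := h.exists
      rw [hsPoly, hsPoly, Finset.sum_range_succ, Finset.sum_range_succ _ (d + 1),
        Finset.sum_congr rfl fun i hi ↦ by rw [hlow i (Finset.mem_range_succ_iff.mp hi)]] at hn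
      simpa using hn
    intro i hi
    obtain hi | rfl := Nat.le_succ_iff.mp hi
    exacts [hlow i hi, htop]

/-- The sequence `l₀, -c, c, …, (-1)^(d-1) c, 0` of Hilbert coefficients in dimension `d`. -/
def alternatingCoeffs (d : ℕ) (l₀ c : ℤ) (i : ℕ) : ℤ :=
  if i = 0 then l₀ else if i < d then (-1) ^ i * c else 0

lemma hsPoly_alternatingCoeffs {d : ℕ} (hd : 0 < d) (l₀ c : ℤ) (n : ℕ) :
    hsPoly d (alternatingCoeffs d l₀ c) (n + 1) + c =
      (d + 1).multichoose n * l₀ + d.multichoose (n + 1) * c := by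
  obtain ⟨k, rfl⟩ : ∃ k, d = k + 1 := ⟨d - 1, by omega⟩
  have hmiddle : ∀ i ∈ Finset.range k,
      (-1 : ℤ) ^ (i + 1) * alternatingCoeffs (k + 1) l₀ c (i + 1) *
        ((n + 1 + (k + 1) - 1 - (i + 1)).choose (k + 1 - (i + 1)) : ℤ) =
      ((n + 1).multichoose (k - 1 - i + 1) : ℤ) * c := by
    intro i hi
    have hi : i < k := Finset.mem_range.mp hi
    rw [alternatingCoeffs, if_neg i.succ_ne_zero, if_pos (by omega), ← mul_assoc, ← pow_add,
      Even.neg_one_pow ⟨_, rfl⟩, one_mul, mul_comm, Nat.multichoose_eq]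
    congr 3 <;> omega
  have hhockey : ∑ j ∈ Finset.range k, ((n + 1).multichoose (j + 1) : ℤ) + 1 =
      (k + 1).multichoose (n + 1) := by
    have h := Nat.sum_range_multichoose k (n + 1)
    rw [Finset.sum_range_succ', Nat.multichoose_zero_right] at h
    rw [Nat.multichoose_eq, show k + 1 + (n + 1) - 1 = k + (n + 1) by omega]
    exact_mod_cast h
  have hfirst : (n + 1 + (k + 1) - 1).choose (k + 1) = (k + 2).multichoose n := by
    rw [Nat.multichoose_eq, show k + 2 + n - 1 = n + (k + 1) by omega, Nat.choose_symm_add,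
      Nat.add_right_comm, Nat.add_sub_cancel]
  rw [hsPoly, Finset.sum_range_succ, Finset.sum_range_succ', Finset.sum_congr rfl hmiddle,
    Finset.sum_range_reflect (fun j ↦ ((n + 1).multichoose (j + 1) : ℤ) * c),
    ← Finset.sum_mul, ← hhockey, Nat.sub_zero, Nat.sub_zero, hfirst]
  rw [show alternatingCoeffs (k + 1) l₀ c 0 = l₀ from rfl,
    show alternatingCoeffs (k + 1) l₀ c (k + 1) = 0 by simp [alternatingCoeffs]]
  ring

end HilbertPolynomial

section RegularSequencePowers

open RingTheory.Sequence

variable {A : Type*} [CommRing A] {M : Type*} [AddCommGroup M] [Module A M]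

/-- The subquotient `P / (P ∩ Q)`, in practice `P / Q` for `Q ≤ P`. -/
abbrev Subquot (P Q : Submodule A M) : Type _ := P ⧸ Q.submoduleOf P

theorem nonempty_prod_subquot_equiv {P Q P' Q' P'' Q'' : Submodule A M} (f : M →ₗ[A] M)
    (hP : ∀ w, w ∈ P'' ↔ ∃ u ∈ P, ∃ v ∈ P', u + f v = w)
    (hQ : ∀ w, w ∈ Q'' ↔ ∃ u ∈ Q, ∃ v ∈ Q', u + f v = w)
    (hinj : ∀ u ∈ P, ∀ v ∈ P', u + f v ∈ Q'' → u ∈ Q ∧ v ∈ Q') :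
    Nonempty ((Subquot P Q × Subquot P' Q') ≃ₗ[A] Subquot P'' Q'') := by
  have hPP : P ≤ P'' := fun u hu ↦ (hP u).mpr ⟨u, hu, 0, zero_mem _, by simp⟩
  have hQQ : Q ≤ Q'' := fun u hu ↦ (hQ u).mpr ⟨u, hu, 0, zero_mem _, by simp⟩
  have hfP : ∀ v ∈ P', f v ∈ P'' := fun v hv ↦ (hP _).mpr ⟨0, zero_mem _, v, hv, by simp⟩
  have hfQ : ∀ v ∈ Q', f v ∈ Q'' := fun v hv ↦ (hQ _).mpr ⟨0, zero_mem _, v, hv, by simp⟩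
  let α : Subquot P Q →ₗ[A] Subquot P'' Q'' :=
    Submodule.mapQ _ _ (Submodule.inclusion hPP) fun u hu ↦ hQQ hu
  let β : Subquot P' Q' →ₗ[A] Subquot P'' Q'' :=
    Submodule.mapQ _ _ (f.restrict hfP) fun v hv ↦ hfQ v hv
  refine ⟨LinearEquiv.ofBijective (α.coprod β) ⟨(injective_iff_map_eq_zero _).mpr ?_, ?_⟩⟩
  · rintro ⟨u, v⟩ huv
    induction u using Submodule.Quotient.induction_on with | _ u
    induction v using Submodule.Quotient.induction_on with | _ v
    have huv : (u + f v : M) ∈ Q'' :=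
      (Submodule.Quotient.mk_eq_zero (Q''.submoduleOf P'')).mp huv
    obtain ⟨hu, hv⟩ := hinj u u.2 v v.2 huv
    exact Prod.ext ((Submodule.Quotient.mk_eq_zero _).mpr hu)
      ((Submodule.Quotient.mk_eq_zero _).mpr hv)
  · intro w
    induction w using Submodule.Quotient.induction_on with | _ w
    obtain ⟨u, hu, v, hv, huv⟩ := (hP w).mp w.2
    exact ⟨(Submodule.Quotient.mk ⟨u, hu⟩, Submodule.Quotient.mk ⟨v, hv⟩),
      congrArg Submodule.Quotient.mk (Subtype.ext huv)⟩

lemma sup_pow_succ_eq (I J : Ideal A) (n : ℕ) :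
    (I ⊔ J) ^ (n + 1) = I ^ (n + 1) ⊔ J * (I ⊔ J) ^ n := by
  refine le_antisymm ?_ (sup_le (Ideal.pow_right_mono le_sup_left _) ?_)
  · induction n with
    | zero => simp
    | succ n ih =>
      have hI : I * (I ⊔ J) ^ (n + 1) ≤ I ^ (n + 2) ⊔ J * (I ⊔ J) ^ (n + 1) :=
        calc I * (I ⊔ J) ^ (n + 1) ≤ I * (I ^ (n + 1) ⊔ J * (I ⊔ J) ^ n) := Ideal.mul_mono_right ih
          _ = I ^ (n + 2) ⊔ J * (I * (I ⊔ J) ^ n) := by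
            rw [Ideal.mul_sup, ← pow_succ', mul_left_comm]
          _ ≤ I ^ (n + 2) ⊔ J * (I ⊔ J) ^ (n + 1) := by
            rw [pow_succ' (I ⊔ J)]
            gcongr
            exact le_sup_left
      rw [pow_succ' _ (n + 1), Ideal.sup_mul]
      exact sup_le hI le_sup_right
  · rw [pow_succ']
    exact Ideal.mul_mono_left le_sup_right

lemma mem_sup_span_singleton_pow_smul {J : Ideal A} {x : A} {n : ℕ} {N : Submodule A M} {w : M} :
    w ∈ (J ⊔ Ideal.span {x}) ^ (n + 1) • N ↔
      ∃ u ∈ J ^ (n + 1) • N, ∃ v ∈ (J ⊔ Ideal.span {x}) ^ n • N, u + x • v = w := by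
  rw [sup_pow_succ_eq, Submodule.sup_smul, mul_smul, Submodule.mem_sup]
  simp only [Submodule.ideal_span_singleton_smul, Submodule.mem_smul_pointwise_iff_exists,
    exists_exists_and_eq_and]

variable {J : Ideal A} {x : A} {n : ℕ} {N : Submodule A M}

lemma mem_and_mem_of_add_smul_mem (hx : IsSMulRegular (M ⧸ (J ^ (n + 1) • ⊤ : Submodule A M)) x)
    (hN : (J ⊔ Ideal.span {x}) • ⊤ ≤ N) {u v : M} (hu : u ∈ J ^ (n + 1) • (⊤ : Submodule A M))
    (huv : u + x • v ∈ (J ⊔ Ideal.span {x}) ^ (n + 1) • N) :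
    u ∈ J ^ (n + 1) • N ∧ v ∈ (J ⊔ Ideal.span {x}) ^ n • N := by
  obtain ⟨u', hu', v', hv', h⟩ := mem_sup_span_singleton_pow_smul.mp huv
  have hxv : x • (v - v') = u' - u := by linear_combination (norm := module) -h
  have hv : v - v' ∈ J ^ (n + 1) • (⊤ : Submodule A M) := by
    refine mem_of_isSMulRegular_quotient_of_smul_mem hx ?_
    rw [hxv]
    exact sub_mem (Submodule.smul_mono le_rfl le_top hu') hu
  have hxM : Ideal.span {x} • (⊤ : Submodule A M) ≤ N :=
    (Submodule.smul_mono_left le_sup_right).trans hN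
  have hxv_mem : x • (v - v') ∈ J ^ (n + 1) • N := by
    refine Submodule.smul_mono le_rfl hxM ?_
    rw [← mul_smul, mul_comm, mul_smul]
    exact Submodule.smul_mem_smul (Ideal.mem_span_singleton_self x) hv
  have hv_mem : v - v' ∈ (J ⊔ Ideal.span {x}) ^ n • N := by
    rw [pow_succ, mul_smul] at hv
    exact Submodule.smul_mono (Ideal.pow_right_mono le_sup_left n)
      ((Submodule.smul_mono_left le_sup_left).trans hN) hv
  constructor
  · convert sub_mem hu' hxv_mem using 1
    rw [hxv, sub_sub_cancel]
  · convert add_mem hv_mem hv' using 1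
    rw [sub_add_cancel]

lemma isSMulRegular_quotient_of_subquot {P Q : Submodule A M} (hQP : Q ≤ P)
    (hP : IsSMulRegular (M ⧸ P) x) (hPQ : IsSMulRegular (Subquot P Q) x) :
    IsSMulRegular (M ⧸ Q) x := by
  refine (isSMulRegular_quotient_iff_mem_of_smul_mem _ _).mpr fun w hw ↦ ?_
  have hwP : w ∈ P := mem_of_isSMulRegular_quotient_of_smul_mem hP (hQP hw)
  exact mem_of_isSMulRegular_quotient_of_smul_mem (x := (⟨w, hwP⟩ : P)) hPQ hw

lemma isSMulRegular_quotient_pow_smul_top {ι : ℕ → Type*}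
    (hJ : ∀ n, Nonempty (Subquot (J ^ n • ⊤ : Submodule A M) (J ^ n • J • ⊤) ≃ₗ[A]
      (ι n → M ⧸ (J • ⊤ : Submodule A M))))
    (hx : IsSMulRegular (M ⧸ (J • ⊤ : Submodule A M)) x) (n : ℕ) :
    IsSMulRegular (M ⧸ (J ^ n • ⊤ : Submodule A M)) x := by
  induction n with
  | zero =>
    refine (isSMulRegular_quotient_iff_mem_of_smul_mem _ _).mpr fun w _ ↦ ?_
    simp
  | succ n ih =>
    obtain ⟨φ⟩ := hJ n
    rw [pow_succ, mul_smul]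
    exact isSMulRegular_quotient_of_subquot (Submodule.smul_mono le_rfl le_top) ih
      ((φ.isSMulRegular_congr x).mpr (IsSMulRegular.pi fun _ ↦ hx))

lemma nonempty_subquot_pow_zero_equiv (J : Ideal A) (N : Submodule A M) (k : ℕ) :
    Nonempty (Subquot (J ^ 0 • ⊤) (J ^ 0 • N) ≃ₗ[A] (Fin (k.multichoose 0) → M ⧸ N)) := by
  rw [pow_zero, one_smul, one_smul, Nat.multichoose_zero_right]
  exact ⟨Submodule.Quotient.equiv _ _ Submodule.topEquiv
    (Submodule.map_comap_eq_of_surjective Submodule.topEquiv.surjective N) ≪≫ₗ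
    (LinearEquiv.funUnique (Fin 1) A _).symm⟩

theorem nonempty_subquot_pow_equiv_pi {l : List A} (hl : IsWeaklyRegular M l) {N : Submodule A M}
    (hN : Ideal.ofList l • ⊤ ≤ N) (n : ℕ) :
    Nonempty (Subquot (Ideal.ofList l ^ n • ⊤) (Ideal.ofList l ^ n • N) ≃ₗ[A]
      (Fin (l.length.multichoose n) → M ⧸ N)) := by
  induction l using List.reverseRecOn generalizing N n with
  | nil =>
    cases n with
    | zero => exact nonempty_subquot_pow_zero_equiv _ N _
    | succ n =>
      rw [List.length_nil, Nat.multichoose_zero_succ, Ideal.ofList_nil, pow_succ,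
        Submodule.mul_bot, Submodule.bot_smul]
      exact ⟨0⟩
  | append_singleton l x ih =>
    obtain ⟨hl, hx⟩ := (isWeaklyRegular_append_iff _ _ _).mp hl
    rw [isWeaklyRegular_singleton_iff] at hx
    have hx := isSMulRegular_quotient_pow_smul_top (fun n ↦ ih hl le_rfl n) hx
    rw [Ideal.ofList_append, Ideal.ofList_singleton] at hN ⊢
    induction n with
    | zero => exact nonempty_subquot_pow_zero_equiv _ N _
    | succ n ihn =>
      obtain ⟨φ⟩ := nonempty_prod_subquot_equiv (LinearMap.lsmul A M x)
        (fun _ ↦ mem_sup_span_singleton_pow_smul) (fun _ ↦ mem_sup_span_singleton_pow_smul)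
        fun u hu v _ ↦ mem_and_mem_of_add_smul_mem (hx (n + 1)) hN hu
      obtain ⟨α⟩ := ih hl ((Submodule.smul_mono_left le_sup_left).trans hN) (n + 1)
      obtain ⟨β⟩ := ihn
      refine ⟨φ.symm ≪≫ₗ α.prodCongr β ≪≫ₗ
        (LinearEquiv.sumArrowLequivProdArrow _ _ A _).symm ≪≫ₗ LinearEquiv.funCongrLeft A _
        ((finCongr ?_).trans finSumFinEquiv.symm)⟩
      rw [List.length_append, List.length_singleton, Nat.multichoose_succ_succ, add_comm]

end RegularSequencePowers

section LengthsOfPowers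

open RingTheory.Sequence

variable {A : Type*} [CommRing A] {M : Type*} [AddCommGroup M] [Module A M]

lemma length_quotient_eq_add_length_subquot {P Q : Submodule A M} (hQP : Q ≤ P) :
    Module.length A (M ⧸ Q) = Module.length A (M ⧸ P) + Module.length A (Subquot P Q) := by
  rw [add_comm]
  refine Module.length_eq_add_of_exact (Submodule.mapQ _ _ P.subtype le_rfl)
    (Submodule.factor hQP) ?_ (Submodule.factor_surjective hQP) ?_
  · rw [← LinearMap.ker_eq_bot]
    exact Submodule.ker_liftQ_eq_bot _ _ _ (by simp [LinearMap.ker_comp, Submodule.submoduleOf])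
  · rw [LinearMap.exact_iff, Submodule.factor, Submodule.ker_mapQ, Submodule.comap_id]
    simp [Submodule.mapQ, Submodule.range_liftQ, LinearMap.range_comp]

lemma smul_submoduleOf_self (J : Ideal A) (N : Submodule A M) :
    (J • N).submoduleOf N = J • ⊤ := by
  rw [Submodule.submoduleOf, Submodule.comap_smul'' N.injective_subtype (by simp),
    Submodule.comap_subtype_self]

variable {l : List A}

lemma length_subquot_pow (hl : IsWeaklyRegular M l) {N : Submodule A M}
    (hN : Ideal.ofList l • ⊤ ≤ N) (n : ℕ) :
    Module.length A (Subquot (Ideal.ofList l ^ n • ⊤) (Ideal.ofList l ^ n • N)) =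
      l.length.multichoose n * Module.length A (M ⧸ N) := by
  obtain ⟨φ⟩ := nonempty_subquot_pow_equiv_pi hl hN n
  rw [φ.length_eq, Module.length_pi, ENat.card_eq_coe_fintype_card, Fintype.card_fin]

lemma length_quotient_pow_succ (hl : IsWeaklyRegular M l) (n : ℕ) :
    Module.length A (M ⧸ (Ideal.ofList l ^ (n + 1) • ⊤ : Submodule A M)) =
      (l.length + 1).multichoose n *
        Module.length A (M ⧸ (Ideal.ofList l • ⊤ : Submodule A M)) := by
  induction n with
  | zero => rw [zero_add, pow_one, Nat.multichoose_zero_right, Nat.cast_one, one_mul]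
  | succ n ih =>
    rw [length_quotient_eq_add_length_subquot
      (Submodule.smul_mono_left (Ideal.pow_le_pow_right (n + 1).le_succ)), ih, pow_succ _ (n + 1),
      mul_smul, length_subquot_pow hl le_rfl, ← add_mul, Nat.multichoose_succ_succ, add_comm,
      Nat.cast_add]

theorem length_quotient_add_length_quotient_pow_succ (hl : IsWeaklyRegular M l)
    {N : Submodule A M} (hN : Ideal.ofList l • ⊤ ≤ N) (n : ℕ) :
    Module.length A (M ⧸ N) +
        Module.length A (N ⧸ (Ideal.ofList l ^ (n + 1) • ⊤ : Submodule A N)) =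
      (l.length + 1).multichoose n *
          Module.length A (M ⧸ (Ideal.ofList l • ⊤ : Submodule A M)) +
        l.length.multichoose (n + 1) * Module.length A (M ⧸ N) := by
  rw [← smul_submoduleOf_self, ← length_quotient_eq_add_length_subquot Submodule.smul_le_right,
    length_quotient_eq_add_length_subquot (Submodule.smul_mono le_rfl le_top),
    length_quotient_pow_succ hl, length_subquot_pow hl hN]

end LengthsOfPowers

section HilbertCoefficients

open RingTheory.Sequence

variable {A : Type u} [CommRing A]

lemma mlen_eq_coe_length (M : Type u) [AddCommGroup M] [Module A M] :
    mlen A M = (Module.length A M : WithBot ℕ∞) :=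
  (Module.coe_length A M).symm

theorem hilbCoeffs_of_smul_top_le {M : Type u} [AddCommGroup M] [Module A M] {l : List A}
    (hl : IsWeaklyRegular M l) (hpos : 0 < l.length) {N : Submodule A M}
    (hN : Ideal.ofList l • ⊤ ≤ N) {c : ℕ} (hc : mlen A (M ⧸ N) = ((c : ℕ∞) : WithBot ℕ∞))
    {e : ℕ → ℤ} (he : HasHilbCoeffs A (Ideal.ofList l) N l.length e) :
    (∀ i, 1 ≤ i → i < l.length → e i = (-1) ^ i * c) ∧ e l.length = 0 := by
  obtain ⟨ℓ, hℓ, hpoly⟩ := he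
  have hcN : Module.length A (M ⧸ N) = c := by
    rwa [mlen_eq_coe_length, WithBot.coe_inj] at hc
  have hℓN (n : ℕ) : Module.length A (N ⧸ (Ideal.ofList l ^ n • ⊤ : Submodule A N)) = ℓ n := by
    simpa only [mlen_eq_coe_length, WithBot.coe_inj] using hℓ n
  have key := length_quotient_add_length_quotient_pow_succ hl hN
  simp only [hcN, hℓN] at key
  obtain ⟨l₀, hl₀⟩ : ∃ l₀ : ℕ,
      Module.length A (M ⧸ (Ideal.ofList l • ⊤ : Submodule A M)) = l₀ := by
    refine ENat.ne_top_iff_exists.mp (fun h ↦ ?_) |>.imp fun _ ↦ Eq.symm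
    simpa [h] using key 0
  simp only [hl₀] at key
  have hcoeff : ∀ᶠ n in atTop,
      hsPoly l.length e n = hsPoly l.length (alternatingCoeffs l.length l₀ c) n := by
    rw [← map_add_atTop_eq_nat 1, eventually_map]
    filter_upwards [(tendsto_add_atTop_nat 1).eventually hpoly] with n hn
    have hkey : c + ℓ (n + 1) =
        (l.length + 1).multichoose n * l₀ + l.length.multichoose (n + 1) * c := mod_cast key n
    rw [← add_left_inj (c : ℤ), ← hn, add_comm, hsPoly_alternatingCoeffs hpos]
    exact_mod_cast hkey
  refine ⟨fun i hi hid ↦ ?_, ?_⟩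
  · rw [eq_of_eventually_hsPoly_eq hcoeff i hid.le, alternatingCoeffs, if_neg (by omega),
      if_pos hid]
  · rw [eq_of_eventually_hsPoly_eq hcoeff _ le_rfl, alternatingCoeffs, if_neg (by omega),
      if_neg (lt_irrefl _)]

end HilbertCoefficients

section Depth

open RingTheory.Sequence Module
open scoped Pointwise

variable {A : Type u} [CommRing A] {M : Type u} [AddCommGroup M] [Module A M]

lemma notMem_of_mem_associatedPrimes [IsNoetherianRing A] {x : A} (hx : IsSMulRegular M x)
    {P : Ideal A} (hP : P ∈ associatedPrimes A M) : x ∉ P := fun hxP ↦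
  (biUnion_associatedPrimes_eq_compl_regular A M).le (Set.mem_biUnion hP hxP) hx

lemma isSMulRegular_of_forall_notMem [IsNoetherianRing A] {x : A}
    (h : ∀ P ∈ associatedPrimes A M, x ∉ P) : IsSMulRegular M x := by
  by_contra hx
  obtain ⟨P, hP, hxP⟩ :=
    Set.mem_iUnion₂.mp ((biUnion_associatedPrimes_eq_compl_regular A M).ge hx)
  exact h P hP hxP

lemma annihilator_sup_ofList_cons_le (x : A) (l : List A) :
    annihilator A M ⊔ Ideal.ofList (x :: l) ≤ annihilator A (QuotSMulTop x M) ⊔ Ideal.ofList l := by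
  rw [Ideal.ofList_cons, ← sup_assoc]
  refine sup_le_sup_right (sup_le ?_ ?_) _
  · exact LinearMap.annihilator_le_of_surjective (Submodule.mkQ _) (Submodule.mkQ_surjective _)
  · exact (Ideal.span_singleton_le_iff_mem _).mpr (QuotSMulTop.mem_annihilator _ _)

variable [IsLocalRing A]

lemma supportDim_nonpos [Module.Finite A M]
    (h : maximalIdeal A ≤ (annihilator A M).radical) : supportDim A M ≤ 0 := by
  have heq (P : support A M) : P.1 = closedPoint A := by
    have hP : annihilator A M ≤ P.1.asIdeal := by
      simpa [support_eq_zeroLocus] using P.2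
    refine PrimeSpectrum.ext (le_antisymm (le_maximalIdeal P.1.2.ne_top) ?_)
    exact h.trans (P.1.2.radical_le_iff.mpr hP)
  have : Subsingleton (support A M) := ⟨fun P Q ↦ Subtype.ext ((heq P).trans (heq Q).symm)⟩
  exact Order.krullDim_nonpos_of_subsingleton

theorem supportDim_le_length [IsNoetherianRing A] [Module.Finite A M] {l : List A}
    (hl : ∀ r ∈ l, r ∈ maximalIdeal A)
    (h : maximalIdeal A ≤ (annihilator A M ⊔ Ideal.ofList l).radical) :
    supportDim A M ≤ l.length := by
  induction l generalizing M with
  | nil => exact supportDim_nonpos (by simpa using h)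
  | cons x t ih =>
    rw [List.forall_mem_cons] at hl
    calc supportDim A M ≤ supportDim A (QuotSMulTop x M) + 1 :=
          supportDim_le_supportDim_quotSMulTop_succ hl.1
      _ ≤ t.length + 1 := by
          gcongr
          exact ih hl.2 (h.trans (Ideal.radical_mono (annihilator_sup_ofList_cons_le x t)))
      _ = (x :: t).length := by simp

variable [Module.Finite A M]

theorem natCast_le_mdepth_iff [Nontrivial M] {n : ℕ} :
    (n : ℕ∞) ≤ mdepth A M ↔
      ∃ rs : List A, rs.length = n ∧ (∀ r ∈ rs, r ∈ maximalIdeal A) ∧ IsRegular M rs := by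
  constructor
  · intro h
    obtain ⟨rs, hn, hrs, hreg⟩ : ∃ rs : List A, n ≤ rs.length ∧
        (∀ r ∈ rs, r ∈ maximalIdeal A) ∧ IsRegular M rs := by
      cases n with
      | zero => exact ⟨[], le_rfl, by simp, IsRegular.nil A M⟩
      | succ n =>
        obtain ⟨_, ⟨rs, rfl, hrs, hreg⟩, hn⟩ :=
          lt_sSup_iff.mp ((Nat.cast_lt.mpr n.lt_succ_self).trans_le h)
        exact ⟨rs, Nat.cast_lt.mp hn, hrs, hreg⟩
    have htake : ∀ r ∈ rs.take n, r ∈ maximalIdeal A := fun r hr ↦ hrs r (List.mem_of_mem_take hr)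
    have hweak : IsWeaklyRegular M (rs.take n ++ rs.drop n) := by
      rw [List.take_append_drop]
      exact hreg.toIsWeaklyRegular
    exact ⟨rs.take n, List.length_take_of_le hn, htake,
      (isRegular_iff_isWeaklyRegular_of_subset_maximalIdeal htake).mpr
        ((isWeaklyRegular_append_iff _ _ _).mp hweak).1⟩
  · rintro ⟨rs, rfl, hrs, hreg⟩
    exact le_sSup ⟨rs, rfl, hrs, hreg⟩

lemma maximalIdeal_smul_top_lt [Nontrivial M] : maximalIdeal A • (⊤ : Submodule A M) < ⊤ :=
  lt_top_iff_ne_top.mpr (Submodule.top_ne_ideal_smul_of_le_jacobson_annihilator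
    (maximalIdeal_le_jacobson _)).symm

variable [IsNoetherianRing A]

open Abelian in
theorem natCast_le_mdepth_quotSMulTop [Nontrivial M] {n : ℕ} (h : ((n + 1 : ℕ) : ℕ∞) ≤ mdepth A M)
    {x : A} (hx : x ∈ maximalIdeal A) (hreg : IsSMulRegular M x) :
    (n : ℕ∞) ≤ mdepth A (QuotSMulTop x M) := by
  have : Nontrivial (QuotSMulTop x M) := nontrivial_quotSMulTop_of_mem_maximalIdeal M hx
  obtain ⟨rs, hlen, hmem, hrs⟩ := natCast_le_mdepth_iff.mp h
  let k := ModuleCat.of A (A ⧸ maximalIdeal A)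
  have hsupp : support A k = PrimeSpectrum.zeroLocus (maximalIdeal A) := by
    rw [support_eq_zeroLocus, Ideal.annihilator_quotient]
  have hext : ∀ i < n + 1, Subsingleton (Ext k (ModuleCat.of A M) i) := hlen ▸
    ModuleCat.subsingleton_ext_of_exists_isRegular (maximalIdeal A) k hsupp.subset
      (ModuleCat.of A M) maximalIdeal_smul_top_lt rs hmem hrs
  have hextQuot : ∀ i < n, Subsingleton (Ext k (ModuleCat.of A (QuotSMulTop x M)) i) := by
    intro i hi
    have hzero := AddCommGrpCat.isZero_of_iff_subsingleton.mpr (hext i (by omega))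
    have hzero' := AddCommGrpCat.isZero_of_iff_subsingleton.mpr (hext (i + 1) (by omega))
    exact AddCommGrpCat.subsingleton_of_isZero <| ShortComplex.Exact.isZero_of_both_zeros
      ((Ext.covariant_sequence_exact₃' k
        (IsSMulRegular.smulShortComplex_shortExact (M := ModuleCat.of A M) hreg)) i (i + 1) rfl)
      (hzero.eq_zero_of_src _) (hzero'.eq_zero_of_tgt _)
  exact natCast_le_mdepth_iff.mpr (ModuleCat.exists_isRegular_of_exists_subsingleton_ext
    (maximalIdeal A) n (ModuleCat.of A (QuotSMulTop x M)) maximalIdeal_smul_top_lt k hsupp hextQuot)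

lemma exists_mem_torsionBySet_notMem_smul_top {x : A} (hx : x ∈ maximalIdeal A)
    (hreg : IsSMulRegular M x) {P : Ideal A} (hP : P ∈ associatedPrimes A M) :
    ∃ w ∈ Submodule.torsionBySet A M P, w ∉ x • (⊤ : Submodule A M) := by
  by_contra! hdiv
  obtain ⟨hPprime, m, hm⟩ := Submodule.isAssociatedPrime_iff.mp hP
  have hbot : Submodule.torsionBySet A M P = ⊥ := by
    refine Submodule.eq_bot_of_le_smul_of_le_jacobson_bot (maximalIdeal A) _
      (IsNoetherian.noetherian _) (fun w hw ↦ ?_) (maximalIdeal_le_jacobson _)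
    obtain ⟨v, -, rfl⟩ := (Submodule.mem_smul_pointwise_iff_exists _ _ _).mp (hdiv w hw)
    refine Submodule.smul_mem_smul hx ((Submodule.mem_torsionBySet_iff _ _).mpr fun p ↦ ?_)
    refine hreg.right_eq_zero_of_smul ?_
    rw [smul_comm]
    exact (Submodule.mem_torsionBySet_iff _ _).mp hw p
  have hmem : m ∈ Submodule.torsionBySet A M P := by
    refine (Submodule.mem_torsionBySet_iff _ _).mpr fun ⟨p, hp⟩ ↦ ?_
    rw [SetLike.mem_coe, hm, Submodule.mem_colon_singleton] at hp
    simpa using hp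
  rw [hbot, Submodule.mem_bot] at hmem
  refine hPprime.ne_top ((Ideal.eq_top_iff_one _).mpr ?_)
  simp [hm, hmem]

lemma exists_mem_associatedPrimes_quotSMulTop {x : A} (hx : x ∈ maximalIdeal A)
    (hreg : IsSMulRegular M x) {P : Ideal A} (hP : P ∈ associatedPrimes A M) :
    ∃ Q ∈ associatedPrimes A (QuotSMulTop x M), P ≤ Q ∧ x ∈ Q := by
  obtain ⟨w, hw, hwx⟩ := exists_mem_torsionBySet_notMem_smul_top hx hreg hP
  have hw0 : (Submodule.Quotient.mk w : QuotSMulTop x M) ≠ 0 := by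
    rwa [Ne, Submodule.Quotient.mk_eq_zero]
  obtain ⟨Q, hQ, hle⟩ := exists_le_isAssociatedPrime_of_isNoetherianRing A _ hw0
  refine ⟨Q, hQ, fun p hp ↦ hle ?_, hle ?_⟩ <;>
    rw [Submodule.mem_colon_singleton, Submodule.mem_bot, ← Submodule.Quotient.mk_smul,
      Submodule.Quotient.mk_eq_zero]
  · rw [(Submodule.mem_torsionBySet_iff _ _).mp hw ⟨p, hp⟩]
    exact zero_mem _
  · exact Submodule.smul_mem_pointwise_smul _ _ _ trivial

theorem length_le_ringKrullDim_of_mem_associatedPrimes {rs : List A}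
    (hmem : ∀ r ∈ rs, r ∈ maximalIdeal A) (hrs : IsWeaklyRegular M rs) {P : Ideal A}
    (hP : P ∈ associatedPrimes A M) : (rs.length : WithBot ℕ∞) ≤ ringKrullDim (A ⧸ P) := by
  have := hP.1
  induction rs generalizing M P with
  | nil => simpa using ringKrullDim_nonneg_of_nontrivial (R := A ⧸ P)
  | cons x t ih =>
    rw [isWeaklyRegular_cons_iff] at hrs
    rw [List.forall_mem_cons] at hmem
    obtain ⟨Q, hQ, hPQ, hxQ⟩ := exists_mem_associatedPrimes_quotSMulTop hmem.1 hrs.1 hP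
    have hxP : Ideal.Quotient.mk P x ≠ 0 := by
      rw [Ne, Ideal.Quotient.eq_zero_iff_mem]
      exact notMem_of_mem_associatedPrimes hrs.1 hP
    calc ((x :: t).length : WithBot ℕ∞) = t.length + 1 := by simp
      _ ≤ ringKrullDim (A ⧸ Q) + 1 := by
          gcongr
          exact ih hmem.2 hrs.2 hQ hQ.1
      _ ≤ ringKrullDim (A ⧸ P) :=
          ringKrullDim_succ_le_of_surjective (Ideal.Quotient.factor hPQ)
            (Ideal.Quotient.factor_surjective hPQ) (mem_nonZeroDivisors_of_ne_zero hxP)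
            (by simpa [Ideal.Quotient.eq_zero_iff_mem] using hxQ)

theorem isWeaklyRegular_of_length_le_mdepth [Nontrivial M] {l : List A}
    (hdepth : (l.length : ℕ∞) ≤ mdepth A M) (hl : ∀ r ∈ l, r ∈ maximalIdeal A)
    (h : maximalIdeal A ≤ (annihilator A M ⊔ Ideal.ofList l).radical) : IsWeaklyRegular M l := by
  induction l generalizing M with
  | nil => exact IsWeaklyRegular.nil A M
  | cons x t ih =>
    rw [List.forall_mem_cons] at hl
    have hreg : IsSMulRegular M x := by
      refine isSMulRegular_of_forall_notMem fun P hP hxP ↦ ?_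
      obtain ⟨rs, hlen, hmem, hrs⟩ := natCast_le_mdepth_iff.mp hdepth
      have hlower := length_le_ringKrullDim_of_mem_associatedPrimes hmem hrs.toIsWeaklyRegular hP
      have hupper : ringKrullDim (A ⧸ P) ≤ t.length := by
        rw [← supportDim_quotient_eq_ringKrullDim]
        refine supportDim_le_length hl.2 (h.trans (Ideal.radical_mono ?_))
        rw [Ideal.annihilator_quotient, Ideal.ofList_cons, ← sup_assoc]
        refine sup_le_sup_right (sup_le ?_ ((Ideal.span_singleton_le_iff_mem P).mpr hxP)) _
        exact (Submodule.annihilator_top (R := A) (M := M)).ge.trans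
          (IsAssociatedPrime.annihilator_le hP)
      rw [hlen, List.length_cons] at hlower
      exact t.length.not_succ_le_self (mod_cast hlower.trans hupper)
    have := nontrivial_quotSMulTop_of_mem_maximalIdeal M hl.1
    exact (isWeaklyRegular_cons_iff _ _ _).mpr ⟨hreg, ih
      (natCast_le_mdepth_quotSMulTop hdepth hl.1 hreg) hl.2
      (h.trans (Ideal.radical_mono (annihilator_sup_ofList_cons_le x t)))⟩

end Depth

section DepthChangeOfRings

open RingTheory.Sequence

variable {A B : Type u} [CommRing A] [IsLocalRing A] [CommRing B] [IsLocalRing B] [Algebra A B]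
  {M : Type u} [AddCommGroup M] [Module A M] [Module B M] [IsScalarTower A B M]

lemma mdepth_le_mdepth_of_surjective (hAB : Surjective (algebraMap A B)) :
    mdepth B M ≤ mdepth A M := by
  refine sSup_le ?_
  rintro _ ⟨rs, rfl, hmem, hrs⟩
  obtain ⟨l, rfl⟩ := List.map_surjective_iff.mpr hAB rs
  have : IsLocalHom (algebraMap A B) := IsLocalHom.of_surjective _ hAB
  refine le_sSup ⟨l, by simp, fun r hr ↦ ?_, ?_⟩
  · exact (maximalIdeal_comap (algebraMap A B)).le (hmem _ (List.mem_map_of_mem hr))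
  · exact ((AddEquiv.refl M).isRegular_congr (List.forall₂_map_left_iff.mpr
      (List.forall₂_same.mpr fun r _ ↦ algebraMap_smul B r))).mp hrs

end DepthChangeOfRings

section DimensionFormula

open RingTheory.Sequence Module
open scoped Pointwise

variable {A : Type u} [CommRing A]

lemma idealHeight_eq_height (I : Ideal A) : idealHeight A I = I.height := by
  refine le_antisymm ?_ (le_iInf₂ fun P hP ↦ ?_)
  · rw [Ideal.height_eq_inf_minimalPrimes]
    refine le_iInf₂ fun P hP ↦ ?_
    exact (iInf₂_le (⟨P, hP.1.1⟩ : PrimeSpectrum A) hP.1.2).trans_eq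
      (PrimeSpectrum.height_eq_orderHeight _).symm
  · rw [← PrimeSpectrum.height_eq_orderHeight]
    exact Ideal.height_mono hP

lemma ringKrullDim_quotient_add_height_le (I : Ideal A) :
    ringKrullDim (A ⧸ I) + I.height ≤ ringKrullDim A := by
  rw [ringKrullDim_quotient, ringKrullDim]
  rcases isEmpty_or_nonempty (PrimeSpectrum.zeroLocus (I : Set A)) with _ | hne
  · simp [Order.krullDim_eq_bot]
  have : Nonempty (PrimeSpectrum A) := ⟨hne.some.1⟩
  rw [Order.krullDim_eq_iSup_coheight_of_nonempty,
    Order.krullDim_eq_iSup_height_add_coheight_of_nonempty, ← WithBot.coe_add,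
    WithBot.coe_le_coe, ENat.iSup_add]
  refine iSup_le fun P ↦ le_iSup_of_le P.1 ?_
  rw [add_comm]
  refine add_le_add ?_ ?_
  · rw [← PrimeSpectrum.height_eq_orderHeight]
    exact Ideal.height_mono P.2
  · exact Order.coheight_le_coheight_apply_of_strictMono Subtype.val (fun _ _ h ↦ h) P

lemma le_height_iInf {ι : Type*} [Finite ι] {I : ι → Ideal A} {h : ℕ∞}
    (hI : ∀ i, h ≤ (I i).height) : h ≤ (⨅ i, I i).height := by
  have := Fintype.ofFinite ι
  rw [Ideal.height_eq_inf_minimalPrimes]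
  refine le_iInf₂ fun P hP ↦ ?_
  obtain ⟨i, -, hi⟩ := (Ideal.IsPrime.inf_le' (s := Finset.univ) (f := I) hP.1.1).mp
    (Finset.inf_univ_eq_iInf I ▸ hP.1.2)
  exact (hI i).trans (Ideal.height_mono hi)

variable [IsNoetherianRing A]

lemma length_le_height_of_isWeaklyRegular {P : Ideal A} [P.IsPrime] {rs : List A}
    (hrs : IsWeaklyRegular A rs) (hmem : ∀ r ∈ rs, r ∈ P) : (rs.length : ℕ∞) ≤ P.height := by
  let B := Localization.AtPrime P
  have hreg : IsRegular B (rs.map (algebraMap A B)) :=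
    hrs.isRegular_of_isLocalization_of_mem B P hmem
  have : Nontrivial (B ⧸ Ideal.ofList (rs.map (algebraMap A B))) :=
    Ideal.Quotient.nontrivial_iff.mpr fun htop ↦ hreg.top_ne_smul (by simp [htop])
  rw [← WithBot.coe_le_coe, ← IsLocalization.AtPrime.ringKrullDim_eq_height P B,
    ← ringKrullDim_add_length_eq_ringKrullDim_of_isRegular _ hreg, List.length_map]
  exact le_add_of_nonneg_left ringKrullDim_nonneg_of_nontrivial

variable {M : Type u} [AddCommGroup M] [Module A M] [Module.Finite A M]

lemma exists_le_mem_associatedPrimes {I : Ideal A} (hI : ∀ x ∈ I, ¬ IsSMulRegular M x) :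
    ∃ P ∈ associatedPrimes A M, I ≤ P := by
  refine (I.subset_union_prime_finite (associatedPrimes.finite A M) (f := id) 0 0
    fun _ hP _ _ ↦ hP.1).mp ?_
  simp only [id, biUnion_associatedPrimes_eq_compl_regular]
  exact hI

variable [IsLocalRing A]

lemma exists_isWeaklyRegular_of_le_mdepth [Nontrivial M] (P : Ideal A) [P.IsPrime] {n : ℕ}
    (hn : (n : ℕ∞) ≤ mdepth A M) :
    ∃ rs : List A, (∀ r ∈ rs, r ∈ P) ∧ IsWeaklyRegular M rs ∧
      (n : WithBot ℕ∞) ≤ ringKrullDim (A ⧸ P) + rs.length := by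
  induction n generalizing M with
  | zero =>
    exact ⟨[], by simp, IsWeaklyRegular.nil A M,
      by simpa using ringKrullDim_nonneg_of_nontrivial (R := A ⧸ P)⟩
  | succ n ih =>
    by_cases! hP : ∃ x ∈ P, IsSMulRegular M x
    · obtain ⟨x, hxP, hx⟩ := hP
      have hxm : x ∈ maximalIdeal A := le_maximalIdeal_of_isPrime P hxP
      have := nontrivial_quotSMulTop_of_mem_maximalIdeal M hxm
      obtain ⟨rs, hmem, hrs, hle⟩ := ih (natCast_le_mdepth_quotSMulTop hn hxm hx)
      refine ⟨x :: rs, List.forall_mem_cons.mpr ⟨hxP, hmem⟩,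
        (isWeaklyRegular_cons_iff _ _ _).mpr ⟨hx, hrs⟩, ?_⟩
      rw [List.length_cons, Nat.cast_succ, Nat.cast_succ, ← add_assoc]
      gcongr
    · obtain ⟨Q, hQ, hPQ⟩ := exists_le_mem_associatedPrimes hP
      obtain ⟨rs, hlen, hmem, hrs⟩ := natCast_le_mdepth_iff.mp hn
      refine ⟨[], by simp, IsWeaklyRegular.nil A M, ?_⟩
      rw [List.length_nil, Nat.cast_zero, add_zero, ← hlen]
      exact (length_le_ringKrullDim_of_mem_associatedPrimes hmem hrs.toIsWeaklyRegular hQ).trans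
        (ringKrullDim_le_of_surjective (Ideal.Quotient.factor hPQ)
          (Ideal.Quotient.factor_surjective hPQ))

theorem mdepth_le_ringKrullDim_quotient_add_height (P : Ideal A) [P.IsPrime] :
    (mdepth A A : WithBot ℕ∞) ≤ ringKrullDim (A ⧸ P) + P.height := by
  have hle (n : ℕ) (hn : (n : ℕ∞) ≤ mdepth A A) :
      (n : WithBot ℕ∞) ≤ ringKrullDim (A ⧸ P) + P.height := by
    obtain ⟨rs, hmem, hrs, hle⟩ := exists_isWeaklyRegular_of_le_mdepth P hn
    have hlen := WithBot.coe_le_coe.mpr (length_le_height_of_isWeaklyRegular hrs hmem)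
    exact hle.trans (by gcongr; exact hlen)
  obtain ⟨k, hk⟩ := WithBot.ne_bot_iff_exists.mp
    ((WithBot.bot_lt_coe 0).trans_le (ringKrullDim_nonneg_of_nontrivial (R := A ⧸ P))).ne'
  rw [← hk] at hle ⊢
  norm_cast at hle ⊢
  exact ENat.forall_natCast_le_iff_le.mp hle

theorem IsCMRing.ringKrullDim_quotient_add_height (hA : IsCMRing A) {I : Ideal A} (hI : I ≠ ⊤) :
    ringKrullDim (A ⧸ I) + I.height = ringKrullDim A := by
  refine (ringKrullDim_quotient_add_height_le I).antisymm ?_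
  obtain ⟨h, hh⟩ := ENat.ne_top_iff_exists.mp (Ideal.height_ne_top hI)
  obtain ⟨P, _, hIP, hP⟩ := Ideal.exists_isPrime_height_eq hh.symm
  calc ringKrullDim A = mdepth A A := hA.symm
    _ ≤ ringKrullDim (A ⧸ P) + P.height := mdepth_le_ringKrullDim_quotient_add_height P
    _ ≤ ringKrullDim (A ⧸ I) + I.height := by
        rw [hP, ← hh]
        gcongr
        exact ringKrullDim_le_of_surjective (Ideal.Quotient.factor hIP)
          (Ideal.Quotient.factor_surjective hIP)

theorem IsCMRing.ringKrullDim_quotient_iInf_le (hA : IsCMRing A) {ι : Type*} [Finite ι]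
    {I : ι → Ideal A} {h : ℕ} (hI : ∀ i, (I i).height = h) (i : ι) :
    ringKrullDim (A ⧸ ⨅ i, I i) ≤ ringKrullDim (A ⧸ I i) := by
  have hIi : I i ≠ ⊤ := by
    intro htop
    simpa [htop] using hI i
  have hinf := WithBot.coe_le_coe.mpr (le_height_iInf fun i ↦ (hI i).ge)
  have hsum : ringKrullDim (A ⧸ ⨅ i, I i) + h ≤ ringKrullDim (A ⧸ I i) + h :=
    calc ringKrullDim (A ⧸ ⨅ i, I i) + h ≤ ringKrullDim (A ⧸ ⨅ i, I i) + (⨅ i, I i).height := by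
          gcongr
          exact hinf
      _ ≤ ringKrullDim A := ringKrullDim_quotient_add_height_le _
      _ = ringKrullDim (A ⧸ I i) + (I i).height := (hA.ringKrullDim_quotient_add_height hIi).symm
      _ = ringKrullDim (A ⧸ I i) + h := by rw [hI i]; rfl
  exact ENat.WithBot.add_le_add_natCast_right_iff.mp hsum

end DimensionFormula

section RegularLocalRings

open RingTheory.Sequence
open scoped Pointwise

variable {A : Type u} [CommRing A] [IsLocalRing A]

lemma natCast_succ_le_mdepth_of_quotSMulTop {M : Type u} [AddCommGroup M] [Module A M]
    [Module.Finite A M] [Nontrivial M] {x : A} (hx : x ∈ maximalIdeal A)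
    (hreg : IsSMulRegular M x) {n : ℕ} (h : (n : ℕ∞) ≤ mdepth A (QuotSMulTop x M)) :
    ((n + 1 : ℕ) : ℕ∞) ≤ mdepth A M := by
  have := nontrivial_quotSMulTop_of_mem_maximalIdeal M hx
  obtain ⟨rs, rfl, hmem, hrs⟩ := natCast_le_mdepth_iff.mp h
  exact natCast_le_mdepth_iff.mpr ⟨x :: rs, by simp, List.forall_mem_cons.mpr ⟨hx, hmem⟩,
    (isRegular_cons_iff _ _ _).mpr ⟨hreg, hrs⟩⟩

lemma exists_maximalIdeal_le_span_singleton_sup_span_erase [DecidableEq A] {s : Finset A}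
    (hs : Ideal.span (s : Set A) = maximalIdeal A) {x : A} (hx : x ∈ maximalIdeal A)
    (hx2 : x ∉ maximalIdeal A ^ 2) :
    ∃ t ∈ s, maximalIdeal A ≤ Ideal.span {x} ⊔ Ideal.span (s.erase t) := by
  obtain ⟨c, -, hc⟩ := Submodule.mem_span_finset.mp (hs.ge hx)
  obtain ⟨t, ht, hunit⟩ : ∃ t ∈ s, IsUnit (c t) := by
    by_contra! hnonunit
    refine hx2 (hc ▸ Ideal.sum_mem _ fun t ht ↦ ?_)
    rw [pow_two]
    exact Ideal.mul_mem_mul (hnonunit t ht) (hs.le (Ideal.subset_span ht))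
  refine ⟨t, ht, ?_⟩
  rw [← hs, ← Finset.insert_erase ht, Finset.erase_insert_eq_erase, Finset.erase_idem,
    Finset.coe_insert, Ideal.span_insert]
  refine sup_le ((Ideal.span_singleton_le_iff_mem _).mpr ?_) le_sup_right
  rw [← Ideal.unit_mul_mem_iff_mem _ hunit]
  have hct : c t * t = x - ∑ a ∈ s.erase t, c a * a := by
    rw [← hc, ← Finset.add_sum_erase _ _ ht]
    simp
  rw [hct]
  exact sub_mem (Ideal.mem_sup_left (Ideal.mem_span_singleton_self x)) <| Ideal.mem_sup_right <|
    Ideal.sum_mem _ fun a ha ↦ Ideal.mul_mem_left _ _ (Ideal.subset_span ha)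

lemma not_maximalIdeal_le_of_mem_minimalPrimes (hdim : 0 < ringKrullDim A) {Q : Ideal A}
    (hQ : Q ∈ minimalPrimes A) : ¬ maximalIdeal A ≤ Q := by
  intro hle
  obtain rfl : maximalIdeal A = Q := hle.antisymm (le_maximalIdeal hQ.1.1.ne_top)
  rw [← maximalIdeal_height_eq_ringKrullDim, Ideal.height_eq_zero_iff.mpr hQ] at hdim
  exact hdim.false

variable [IsNoetherianRing A]

lemma spanFinrank_maximalIdeal_quotient_add_one_le {x : A} [IsLocalRing (A ⧸ Ideal.span {x})]
    (hx : x ∈ maximalIdeal A) (hx2 : x ∉ maximalIdeal A ^ 2) :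
    (maximalIdeal (A ⧸ Ideal.span {x})).spanFinrank + 1 ≤ (maximalIdeal A).spanFinrank := by
  classical
  have hfg : Submodule.FG (maximalIdeal A) := (maximalIdeal A).fg_of_isNoetherianRing
  let s := hfg.finite_generators.toFinset
  have hspan : Ideal.span (s : Set A) = maximalIdeal A := by
    rw [hfg.finite_generators.coe_toFinset]
    exact Submodule.span_generators _
  have hcard : s.card = (maximalIdeal A).spanFinrank := by
    rw [← hfg.generators_ncard, Set.ncard_eq_toFinset_card _ hfg.finite_generators]
  obtain ⟨t, ht, hle⟩ := exists_maximalIdeal_le_span_singleton_sup_span_erase hspan hx hx2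
  have himage : maximalIdeal (A ⧸ Ideal.span {x}) =
      Ideal.span ((s.erase t).image (Ideal.Quotient.mk (Ideal.span {x}))) := by
    rw [← map_maximalIdeal_of_surjective _ Ideal.Quotient.mk_surjective, Finset.coe_image,
      ← Ideal.map_span]
    refine le_antisymm ?_ (Ideal.map_mono ?_)
    · simpa [Ideal.map_sup] using Ideal.map_mono (f := Ideal.Quotient.mk (Ideal.span {x})) hle
    · exact (Ideal.span_mono (s.erase_subset t)).trans hspan.le
  rw [himage, ← hcard, ← Finset.card_erase_add_one ht]
  gcongr
  exact (Submodule.spanFinrank_span_le_ncard_of_finite (Finset.finite_toSet _)).trans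
    ((Set.ncard_coe_finset _).trans_le Finset.card_image_le)

lemma ringKrullDim_le_ringKrullDim_quotient_span_singleton_add_one {x : A}
    (hx : x ∈ maximalIdeal A) :
    ringKrullDim A ≤ ringKrullDim (A ⧸ Ideal.span {x}) + 1 := by
  simpa using ringKrullDim_le_ringKrullDim_quotient_add_encard {x}
    (by simpa [IsLocalRing.ringJacobson_eq_maximalIdeal] using hx)

lemma not_maximalIdeal_le_sq (hdim : 0 < ringKrullDim A) :
    ¬ maximalIdeal A ≤ maximalIdeal A ^ 2 := by
  intro hle
  have hbot : maximalIdeal A = ⊥ :=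
    Submodule.eq_bot_of_le_smul_of_le_jacobson_bot (maximalIdeal A) _ (IsNoetherian.noetherian _)
      (by rwa [smul_eq_mul, ← pow_two]) (maximalIdeal_le_jacobson _)
  obtain ⟨Q, hQ⟩ := Ideal.nonempty_minimalPrimes (I := (⊥ : Ideal A)) bot_ne_top
  exact not_maximalIdeal_le_of_mem_minimalPrimes hdim hQ (hbot ▸ bot_le)

lemma exists_mem_maximalIdeal_notMem_sq_notMem_minimalPrimes (hdim : 0 < ringKrullDim A) :
    ∃ x ∈ maximalIdeal A, x ∉ maximalIdeal A ^ 2 ∧ ∀ Q ∈ minimalPrimes A, x ∉ Q := by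
  by_contra! hcover
  have hfin : (insert (maximalIdeal A ^ 2) (minimalPrimes A)).Finite :=
    (minimalPrimes.finite_of_isNoetherianRing A).insert _
  obtain ⟨Q, rfl | hQ, hle⟩ := (Ideal.subset_union_prime_finite hfin (f := id) (maximalIdeal A ^ 2)
    (maximalIdeal A ^ 2) fun Q hQ hne _ ↦ ((Set.mem_insert_iff.mp hQ).resolve_left hne).1.1).mp
      fun x hx ↦ by
        by_cases hx2 : x ∈ maximalIdeal A ^ 2
        · exact Set.mem_biUnion (Set.mem_insert _ _) hx2
        · obtain ⟨Q, hQ, hxQ⟩ := hcover x hx hx2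
          exact Set.mem_biUnion (Set.mem_insert_of_mem _ hQ) hxQ
  · exact not_maximalIdeal_le_sq hdim hle
  · exact not_maximalIdeal_le_of_mem_minimalPrimes hdim hQ hle

lemma isDomain_of_isPrime_span_singleton {x : A} (hx : x ∈ maximalIdeal A)
    (hxQ : ∀ Q ∈ minimalPrimes A, x ∉ Q) (hprime : (Ideal.span {x}).IsPrime) : IsDomain A := by
  obtain ⟨Q, hQ, hQx⟩ := Ideal.exists_minimalPrimes_le (bot_le : ⊥ ≤ Ideal.span {x})
  have hQprime := hQ.1.1
  have hQbot : Q = ⊥ := by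
    refine Submodule.eq_bot_of_le_smul_of_le_jacobson_bot (maximalIdeal A) _
      (IsNoetherian.noetherian _) (fun q hq ↦ ?_) (maximalIdeal_le_jacobson _)
    obtain ⟨b, rfl⟩ := Ideal.mem_span_singleton'.mp (hQx hq)
    rw [mul_comm]
    exact Submodule.smul_mem_smul hx ((hQprime.mem_or_mem hq).resolve_right (hxQ Q hQ))
  subst hQbot
  exact IsDomain.of_bot_isPrime A

theorem mdepth_le_ringKrullDim : (mdepth A A : WithBot ℕ∞) ≤ ringKrullDim A := by
  rw [← maximalIdeal_height_eq_ringKrullDim, WithBot.coe_le_coe]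
  refine sSup_le ?_
  rintro _ ⟨rs, rfl, hmem, hrs⟩
  exact length_le_height_of_isWeaklyRegular hrs.toIsWeaklyRegular hmem

theorem IsRegularLocal.isRegularLocalRing (hA : IsRegularLocal A) : IsRegularLocalRing A := by
  obtain ⟨s, hs, hcard⟩ := hA
  refine .of_spanFinrank_maximalIdeal_le _ ?_
  rw [← hs, ← hcard]
  exact_mod_cast (Submodule.spanFinrank_span_le_ncard_of_finite s.finite_toSet).trans_eq
    (Set.ncard_coe_finset s)

end RegularLocalRings

section RegularIsCohenMacaulay

open scoped Pointwise

variable {A : Type u} [CommRing A] [IsRegularLocalRing A]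

theorem isRegularLocalRing_quotient_span_singleton {x : A}
    (hx : x ∈ maximalIdeal A) (hx2 : x ∉ maximalIdeal A ^ 2) :
    IsRegularLocalRing (A ⧸ Ideal.span {x}) := by
  have : Nontrivial (A ⧸ Ideal.span {x}) := Ideal.Quotient.nontrivial_iff.mpr
    (ne_top_of_le_ne_top Ideal.IsPrime.ne_top' ((Ideal.span_singleton_le_iff_mem _).mpr hx))
  have : IsLocalRing (A ⧸ Ideal.span {x}) := .of_surjective' _ Ideal.Quotient.mk_surjective
  refine .of_spanFinrank_maximalIdeal_le _ ?_
  rw [← ENat.WithBot.add_le_add_natCast_right_iff (c := 1)]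
  calc ((maximalIdeal (A ⧸ Ideal.span {x})).spanFinrank : WithBot ℕ∞) + (1 : ℕ)
      ≤ (maximalIdeal A).spanFinrank :=
        mod_cast spanFinrank_maximalIdeal_quotient_add_one_le hx hx2
    _ = ringKrullDim A := IsRegularLocalRing.spanFinrank_maximalIdeal
    _ ≤ ringKrullDim (A ⧸ Ideal.span {x}) + (1 : ℕ) :=
        mod_cast ringKrullDim_le_ringKrullDim_quotient_span_singleton_add_one hx

lemma spanFinrank_maximalIdeal_quotient {x : A} [IsRegularLocalRing (A ⧸ Ideal.span {x})]
    (hx : x ∈ maximalIdeal A) (hx2 : x ∉ maximalIdeal A ^ 2) :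
    (maximalIdeal (A ⧸ Ideal.span {x})).spanFinrank + 1 = (maximalIdeal A).spanFinrank := by
  refine (spanFinrank_maximalIdeal_quotient_add_one_le hx hx2).antisymm ?_
  have hdim := ringKrullDim_le_ringKrullDim_quotient_span_singleton_add_one hx
  rw [← IsRegularLocalRing.spanFinrank_maximalIdeal,
    ← IsRegularLocalRing.spanFinrank_maximalIdeal] at hdim
  exact_mod_cast hdim

theorem isDomain_of_isRegularLocalRing : IsDomain A := by
  induction hn : (maximalIdeal A).spanFinrank generalizing A with
  | zero =>
    have hbot := (Submodule.spanFinrank_eq_zero_iff_eq_bot (IsNoetherian.noetherian _)).mp hn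
    exact (isField_iff_maximalIdeal_eq.mpr hbot).isDomain
  | succ n ih =>
    have hdim : 0 < ringKrullDim A := by
      rw [← IsRegularLocalRing.spanFinrank_maximalIdeal, hn]
      exact_mod_cast n.succ_pos
    obtain ⟨x, hx, hx2, hxQ⟩ := exists_mem_maximalIdeal_notMem_sq_notMem_minimalPrimes hdim
    have := isRegularLocalRing_quotient_span_singleton hx hx2
    have hquot := ih (A := A ⧸ Ideal.span {x})
      (Nat.succ.inj ((spanFinrank_maximalIdeal_quotient hx hx2).trans hn))
    exact isDomain_of_isPrime_span_singleton hx hxQ ((Ideal.Quotient.isDomain_iff_prime _).mp hquot)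

theorem spanFinrank_maximalIdeal_le_mdepth :
    ((maximalIdeal A).spanFinrank : ℕ∞) ≤ mdepth A A := by
  induction hn : (maximalIdeal A).spanFinrank generalizing A with
  | zero => simp
  | succ n ih =>
    have hdim : 0 < ringKrullDim A := by
      rw [← IsRegularLocalRing.spanFinrank_maximalIdeal, hn]
      exact_mod_cast n.succ_pos
    obtain ⟨x, hx, hx2⟩ := Set.not_subset.mp (not_maximalIdeal_le_sq hdim)
    have := isRegularLocalRing_quotient_span_singleton hx hx2
    have hquot : (n : ℕ∞) ≤ mdepth A (A ⧸ Ideal.span {x}) :=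
      (ih (A := A ⧸ Ideal.span {x})
        (Nat.succ.inj ((spanFinrank_maximalIdeal_quotient hx hx2).trans hn))).trans
        (mdepth_le_mdepth_of_surjective Ideal.Quotient.mk_surjective)
    have := isDomain_of_isRegularLocalRing (A := A)
    have hx0 : x ≠ 0 := by
      rintro rfl
      exact hx2 (zero_mem _)
    refine natCast_succ_le_mdepth_of_quotSMulTop hx (IsSMulRegular.of_ne_zero hx0) ?_
    have hspan : Ideal.span {x} = x • (⊤ : Ideal A) := by
      rw [← Submodule.ideal_span_singleton_smul, smul_eq_mul, Ideal.mul_top]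
    change (n : ℕ∞) ≤ mdepth A (A ⧸ x • (⊤ : Ideal A))
    rw [← hspan]
    exact hquot

theorem isCMRing_of_isRegularLocalRing : IsCMRing A := by
  refine mdepth_le_ringKrullDim.antisymm ?_
  rw [← IsRegularLocalRing.spanFinrank_maximalIdeal]
  exact WithBot.coe_le_coe.mpr spanFinrank_maximalIdeal_le_mdepth

end RegularIsCohenMacaulay

section ProductsOfModules

open RingTheory.Sequence

variable {A : Type*} [CommRing A] {ι : Type*} [Finite ι] {M : ι → Type*}
  [∀ i, AddCommGroup (M i)] [∀ i, Module A (M i)]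

lemma mem_smul_top_pi_iff {J : Ideal A} {w : ∀ i, M i} :
    w ∈ J • (⊤ : Submodule A (∀ i, M i)) ↔ ∀ i, w i ∈ J • (⊤ : Submodule A (M i)) := by
  classical
  have := Fintype.ofFinite ι
  refine ⟨fun hw i ↦ ?_, fun hw ↦ ?_⟩
  · exact Submodule.smul_top_le_comap_smul_top J (LinearMap.proj i) hw
  · rw [← Finset.univ_sum_single w]
    exact Submodule.sum_mem _ fun i _ ↦
      Submodule.smul_top_le_comap_smul_top J (LinearMap.single A M i) (hw i)

theorem isWeaklyRegular_pi {l : List A} (hl : ∀ i, IsWeaklyRegular (M i) l) :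
    IsWeaklyRegular (∀ i, M i) l := by
  induction l using List.reverseRecOn with
  | nil => exact IsWeaklyRegular.nil A _
  | append_singleton l x ih =>
    simp only [isWeaklyRegular_append_iff, isWeaklyRegular_singleton_iff,
      isSMulRegular_quotient_iff_mem_of_smul_mem] at hl ⊢
    refine ⟨ih fun i ↦ (hl i).1, fun w hw ↦ ?_⟩
    rw [mem_smul_top_pi_iff] at hw ⊢
    exact fun i ↦ (hl i).2 (w i) (hw i)

end ProductsOfModules

section HilbertCoefficientsTransfer

variable {A : Type u} [CommRing A] {J : Ideal A} {d : ℕ} {e : ℕ → ℤ}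
  {M : Type u} [AddCommGroup M] [Module A M]

theorem HasHilbCoeffs.restrictScalars {B : Type u} [CommRing B] [Algebra A B] [Module B M]
    [IsScalarTower A B M] (hAB : Surjective (algebraMap A B))
    (he : HasHilbCoeffs B (J.map (algebraMap A B)) M d e) : HasHilbCoeffs A J M d e := by
  obtain ⟨ℓ, hℓ, hpoly⟩ := he
  refine ⟨ℓ, fun n ↦ ?_, hpoly⟩
  rw [← hℓ n, mlen_eq_coe_length, mlen_eq_coe_length, ← Module.length_eq_of_surjective hAB,
    ← Ideal.map_pow, ← (Submodule.Quotient.restrictScalarsEquiv A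
      ((J ^ n).map (algebraMap A B) • ⊤ : Submodule B M)).length_eq,
    Ideal.smul_restrictScalars, Submodule.restrictScalars_top]

theorem HasHilbCoeffs.of_linearEquiv {M' : Type u} [AddCommGroup M'] [Module A M']
    (φ : M ≃ₗ[A] M') (he : HasHilbCoeffs A J M d e) : HasHilbCoeffs A J M' d e := by
  obtain ⟨ℓ, hℓ, hpoly⟩ := he
  refine ⟨ℓ, fun n ↦ ?_, hpoly⟩
  have hmap : (J ^ n • ⊤ : Submodule A M).map (φ : M →ₗ[A] M') = J ^ n • ⊤ := by
    rw [Submodule.map_smul'', Submodule.map_top, LinearEquiv.range]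
  rw [← hℓ n, mlen_eq_coe_length, mlen_eq_coe_length,
    (Submodule.Quotient.equiv _ _ φ hmap).length_eq]

lemma HasHilbCoeffs.length_quotient_smul_top_ne_top (he : HasHilbCoeffs A J M d e) :
    Module.length A (M ⧸ (J • ⊤ : Submodule A M)) ≠ ⊤ := by
  obtain ⟨ℓ, hℓ, -⟩ := he
  have h := hℓ 1
  rw [pow_one, mlen_eq_coe_length, WithBot.coe_inj] at h
  exact h ▸ ENat.natCast_ne_top _

lemma maximalIdeal_le_radical_of_length_ne_top [IsLocalRing A]
    (h : Module.length A (A ⧸ J) ≠ ⊤) : maximalIdeal A ≤ J.radical := by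
  rw [Module.length_ne_top_iff, isFiniteLength_iff_isNoetherian_isArtinian] at h
  have : IsArtinianRing (A ⧸ J) := isArtinian_of_tower A h.2
  obtain ⟨n, hn⟩ := exists_maximalIdeal_pow_le_of_isArtinianRing_quotient J
  exact fun x hx ↦ ⟨n, hn (Ideal.pow_mem_pow hx n)⟩

theorem HasHilbCoeffs.maximalIdeal_le_radical_sup [IsLocalRing A] {I : Ideal A}
    (he : HasHilbCoeffs A J (A ⧸ I) d e) : maximalIdeal A ≤ (I ⊔ J).radical := by
  have hker : J • ⊤ ≤ LinearMap.ker (Submodule.factor (le_sup_left : I ≤ I ⊔ J)) := by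
    refine Submodule.smul_le.mpr fun r hr x _ ↦ ?_
    induction x using Submodule.Quotient.induction_on with | _ x
    refine (Submodule.Quotient.mk_eq_zero _).mpr ?_
    exact Ideal.mul_mem_right x _ (Ideal.mem_sup_right hr)
  refine maximalIdeal_le_radical_of_length_ne_top (ne_top_of_le_ne_top
    he.length_quotient_smul_top_ne_top
    (Module.length_le_of_surjective (Submodule.liftQ _ _ hker) ?_))
  exact fun x ↦ (Submodule.factor_surjective le_sup_left x).imp' Submodule.Quotient.mk fun _ h ↦ h

end HilbertCoefficientsTransfer

section Diagonal

variable {A : Type u} [CommRing A]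

/-- The diagonal map `A → ∏ᵢ A ⧸ Iᵢ`. Its range is a copy of `A ⧸ ⨅ᵢ Iᵢ` and its cokernel is the
module `L` of the theorem. -/
abbrev diagonalMap {ι : Type*} (I : ι → Ideal A) : A →ₗ[A] ∀ i, A ⧸ I i :=
  LinearMap.pi fun i ↦ Algebra.linearMap A (A ⧸ I i)

lemma ker_diagonalMap {ι : Type*} (I : ι → Ideal A) : LinearMap.ker (diagonalMap I) = ⨅ i, I i := by
  rw [LinearMap.ker_pi]
  exact iInf_congr fun i ↦ Ideal.mk_ker

theorem HasHilbCoeffs.range_diagonalMap {ι : Type} {I : ι → Ideal A} {J : Ideal A} {d : ℕ}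
    {e : ℕ → ℤ} (he : HasHilbCoeffs A J (A ⧸ ⨅ i, I i) d e) :
    HasHilbCoeffs A J (LinearMap.range (diagonalMap I)) d e :=
  he.of_linearEquiv (Submodule.quotEquivOfEq _ _ (ker_diagonalMap I).symm ≪≫ₗ
    (diagonalMap I).quotKerEquivRange)

theorem nontrivial_coker_diagonalMap [IsLocalRing A] {ι : Type*} [Nontrivial ι] {I : ι → Ideal A}
    (hI : ∀ i, I i ≠ ⊤) : Nontrivial ((∀ i, A ⧸ I i) ⧸ LinearMap.range (diagonalMap I)) := by
  classical
  obtain ⟨i, j, hij⟩ := exists_pair_ne ι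
  refine Submodule.Quotient.nontrivial_iff.mpr fun htop ↦ ?_
  obtain ⟨x, hx⟩ : Pi.single i 1 ∈ LinearMap.range (diagonalMap I) := htop ▸ Submodule.mem_top
  have hxi : 1 - x ∈ I i := by
    rw [← Ideal.Quotient.eq, map_one, ← Pi.single_eq_same (M := fun i ↦ A ⧸ I i) i 1, ← hx]
    rfl
  have hxj : x ∈ I j := by
    rw [← Ideal.Quotient.eq_zero_iff_mem, ← Pi.single_eq_of_ne (M := fun i ↦ A ⧸ I i) hij.symm 1,
      ← hx]
    rfl
  refine (maximalIdeal.isMaximal A).ne_top ((Ideal.eq_top_iff_one _).mpr ?_)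
  rw [← sub_add_cancel 1 x]
  exact add_mem (le_maximalIdeal (hI i) hxi) (le_maximalIdeal (hI j) hxj)

end Diagonal

section ProductsOfQuotients

open RingTheory.Sequence

variable {A : Type u} [CommRing A]

lemma smul_top_le_of_le_annihilator_quotient {M : Type*} [AddCommGroup M] [Module A M]
    {N : Submodule A M} {J : Ideal A} (hJ : J ≤ Module.annihilator A (M ⧸ N)) : J • ⊤ ≤ N :=
  Submodule.smul_le.mpr fun _ hr w _ ↦
    (Submodule.Quotient.mk_eq_zero N).mp (Module.mem_annihilator.mp (hJ hr) (N.mkQ w))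

lemma ofList_ofFn {d : ℕ} (a : Fin d → A) :
    Ideal.ofList (List.ofFn a) = Ideal.span (Set.range a) := by
  simp only [Ideal.ofList, List.mem_ofFn]
  rfl

variable [IsLocalRing A]

lemma nontrivial_of_mdepth_pos {M : Type u} [AddCommGroup M] [Module A M] (h : 0 < mdepth A M) :
    Nontrivial M := by
  obtain ⟨_, ⟨_, -, -, hrs⟩, -⟩ := lt_sSup_iff.mp h
  exact hrs.nontrivial

lemma le_maximalIdeal_of_le_annihilator {M : Type*} [AddCommGroup M] [Module A M] [Nontrivial M]
    {J : Ideal A} (hJ : J ≤ Module.annihilator A M) : J ≤ maximalIdeal A :=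
  hJ.trans (le_maximalIdeal fun htop ↦
    not_subsingleton M (Module.annihilator_eq_top_iff.mp htop))

variable [IsNoetherianRing A]

theorem isWeaklyRegular_pi_quotient {ι : Type*} [Finite ι] {I : ι → Ideal A} {l : List A}
    (hdepth : ∀ i, (l.length : ℕ∞) ≤ mdepth A (A ⧸ I i)) (hI : ∀ i, I i ≠ ⊤)
    (hl : Ideal.ofList l ≤ maximalIdeal A)
    (h : maximalIdeal A ≤ ((⨅ i, I i) ⊔ Ideal.ofList l).radical) :
    IsWeaklyRegular (∀ i, A ⧸ I i) l := by
  refine isWeaklyRegular_pi fun i ↦ ?_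
  have : Nontrivial (A ⧸ I i) := Ideal.Quotient.nontrivial_iff.mpr (hI i)
  refine isWeaklyRegular_of_length_le_mdepth (hdepth i)
    (fun r hr ↦ hl (Ideal.subset_span hr)) (h.trans (Ideal.radical_mono ?_))
  rw [Ideal.annihilator_quotient]
  exact sup_le_sup_right (iInf_le I i) _

theorem IsRegularLocal.natCast_le_mdepth_quotient (hA : IsRegularLocal A) {ι : Type*} [Finite ι]
    {I : ι → Ideal A} [∀ i, IsLocalRing (A ⧸ I i)] (hCM : ∀ i, IsCMRing (A ⧸ I i)) {h : ℕ}
    (hI : ∀ i, idealHeight A (I i) = h) {d : ℕ}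
    (hd : ringKrullDim (A ⧸ ⨅ i, I i) = ((d : ℕ∞) : WithBot ℕ∞)) (i : ι) :
    (d : ℕ∞) ≤ mdepth A (A ⧸ I i) := by
  have := hA.isRegularLocalRing
  simp only [idealHeight_eq_height] at hI
  have hdim : ((d : ℕ∞) : WithBot ℕ∞) ≤ mdepth (A ⧸ I i) (A ⧸ I i) :=
    calc ((d : ℕ∞) : WithBot ℕ∞) = ringKrullDim (A ⧸ ⨅ i, I i) := hd.symm
      _ ≤ ringKrullDim (A ⧸ I i) :=
          isCMRing_of_isRegularLocalRing.ringKrullDim_quotient_iInf_le hI i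
      _ = mdepth (A ⧸ I i) (A ⧸ I i) := (hCM i).symm
  exact (WithBot.coe_le_coe.mp hdim).trans
    (mdepth_le_mdepth_of_surjective Ideal.Quotient.mk_surjective)

end ProductsOfQuotients

theorem stmt_9_general {S : Type u} [CommRing S] [IsLocalRing S] [IsNoetherianRing S]
    {ι : Type} [Finite ι] [Nontrivial ι] {I : ι → Ideal S} {d : ℕ} (hd2 : 2 ≤ d)
    (hdepth : ∀ i, (d : ℕ∞) ≤ mdepth S (S ⧸ I i)) {a : Fin d → S} {lL : ℕ}
    (hlen : mlen S ((∀ i, S ⧸ I i) ⧸ LinearMap.range (diagonalMap I)) = ((lL : ℕ∞) : WithBot ℕ∞))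
    (hann : Ideal.span (Set.range a) ≤
      Module.annihilator S ((∀ i, S ⧸ I i) ⧸ LinearMap.range (diagonalMap I)))
    {e : ℕ → ℤ}
    (he : HasHilbCoeffs (S ⧸ ⨅ i, I i)
      (Ideal.span (Set.range fun i ↦ Ideal.Quotient.mk (⨅ i, I i) (a i))) (S ⧸ ⨅ i, I i) d e) :
    (∀ i, 1 ≤ i → i ≤ d - 1 → e i = (-1 : ℤ) ^ i * (lL : ℤ)) ∧ e d = 0 ∧
      e 1 = -(lL : ℤ) ∧ e 1 < 0 := by
  have hI (i : ι) : I i ≠ ⊤ := by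
    have := nontrivial_of_mdepth_pos ((Nat.cast_pos.mpr (by omega)).trans_le (hdepth i))
    exact Ideal.Quotient.nontrivial_iff.mp this
  have := nontrivial_coker_diagonalMap hI
  have heS : HasHilbCoeffs S (Ideal.span (Set.range a)) (S ⧸ ⨅ i, I i) d e := by
    refine .restrictScalars (B := S ⧸ ⨅ i, I i) Ideal.Quotient.mk_surjective ?_
    rwa [Ideal.map_span, ← Set.range_comp]
  have hlL : (0 : ℤ) < lL := by
    have hpos := Module.length_pos (R := S) (M := (∀ i, S ⧸ I i) ⧸ LinearMap.range (diagonalMap I))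
    rw [mlen_eq_coe_length, WithBot.coe_inj] at hlen
    exact_mod_cast hlen ▸ hpos
  obtain ⟨l, rfl, hl⟩ : ∃ l : List S, l.length = d ∧ Ideal.ofList l = Ideal.span (Set.range a) :=
    ⟨List.ofFn a, List.length_ofFn, ofList_ofFn a⟩
  rw [← hl] at hann heS
  have hreg := isWeaklyRegular_pi_quotient hdepth hI
    (le_maximalIdeal_of_le_annihilator hann) heS.maximalIdeal_le_radical_sup
  obtain ⟨hmid, htop⟩ := hilbCoeffs_of_smul_top_le hreg (by omega)
    (smul_top_le_of_le_annihilator_quotient hann) hlen heS.range_diagonalMap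
  have he1 : e 1 = -lL := by simpa using hmid 1 le_rfl (by omega)
  exact ⟨fun i hi hid ↦ hmid i hi (by omega), htop, he1, by omega⟩

/-- **Mandal–Verma.** With `R = S/(I₁ ∩ ⋯ ∩ I_g)` as above, `J = (a₁,…,a_d)` inducing a system
of parameters of `R`, `K = JR` and `L = [⊕ᵢ S/Iᵢ]/R`: if `J ⊆ ann L`, then
`eᵢ(K) = (-1)ⁱ λ(L)` for `1 ≤ i ≤ d-1`, `e_d(K) = 0`, and in particular `e₁(K) = -λ(L) < 0`. -/
theorem stmt_9 (S : Type u) [CommRing S] [IsLocalRing S] [IsNoetherianRing S]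
    (hreg : IsRegularLocal S)
    (g : ℕ) (hg : 2 ≤ g) (I : Fin g → Ideal S) (h : ℕ)
    [∀ i, IsLocalRing (S ⧸ I i)] (hCM : ∀ i, IsCMRing (S ⧸ I i))
    (hht : ∀ i, idealHeight S (I i) = (h : ℕ∞))
    (hprim : ∀ i j, i ≠ j → (I i + I j).radical = maximalIdeal S)
    [IsLocalRing (S ⧸ (⨅ i, I i))]
    (d : ℕ) (hd2 : 2 ≤ d) (hd : ringKrullDim (S ⧸ (⨅ i, I i)) = ((d : ℕ∞) : WithBot ℕ∞))
    (a : Fin d → S)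
    (hpar : IsParameterIdeal (S ⧸ (⨅ i, I i))
      (Ideal.span (Set.range fun i => Ideal.Quotient.mk (⨅ i, I i) (a i))) d
      (S ⧸ (⨅ i, I i)))
    (lL : ℕ)
    (hlen : mlen S ((((i : Fin g) → S ⧸ I i)) ⧸
        LinearMap.range (LinearMap.pi fun i => Algebra.linearMap S (S ⧸ I i)))
      = ((lL : ℕ∞) : WithBot ℕ∞))
    (hann : Ideal.span (Set.range a) ≤ Module.annihilator S
      ((((i : Fin g) → S ⧸ I i)) ⧸
        LinearMap.range (LinearMap.pi fun i => Algebra.linearMap S (S ⧸ I i))))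
    (e : ℕ → ℤ)
    (he : HasHilbCoeffs (S ⧸ (⨅ i, I i))
      (Ideal.span (Set.range fun i => Ideal.Quotient.mk (⨅ i, I i) (a i)))
      (S ⧸ (⨅ i, I i)) d e) :
    (∀ i, 1 ≤ i → i ≤ d - 1 → e i = (-1 : ℤ) ^ i * (lL : ℤ)) ∧ e d = 0 ∧
      e 1 = -(lL : ℤ) ∧ e 1 < 0 := by
  have : Nontrivial (Fin g) := Fin.nontrivial_iff_two_le.mpr hg
  exact stmt_9_general hd2 (hreg.natCast_le_mdepth_quotient hCM hht hd) hlen hann he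
end
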